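/- arXiv:2406.15184 — 2 statements merged into one kernel-verified Lean document; each statement's English description precedes it below -/
import Mathlib

section
/- Rousseau's Theorem on Sheffer functions. Let A be a finite set with |A| ≥ 2. An operation f on A is a Sheffer function (i.e. the singleton {f} is complete) if and only if f ∉ Pol(ρ) for every relation ρ on A of the following kinds: the graph of a fixed-point-free permutation of A all of whose cycles have the same prime length; a nontrivial equivalence relation on A (different from the equality relation and from A × A); and a nontrivial unary relation on A (a nonempty proper subset of A). Equivalently, the algebra (A; f) is primal if and only if it has no nontrivial automorphisms, no proper nonempty subalgebras, and no nontrivial congruences. -/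
/-!
If `f` is complete, then every unary operation preserves each invariant relation of `(A; f)`, and
unary operations move a pair of distinct elements, or an element, anywhere. Conversely, assume that
`(A; f)` has no proper subuniverses, no nontrivial congruences and no nontrivial automorphisms;
fixed points and powers reduce the latter to fixed-point-free automorphisms of prime order.

The operations of arity `m` in the clone of `f` form an invariant relation, with one coordinate for
each of the `m`-tuples, no two of which agree on all of the relation because of the projections. So
it is enough that a nonempty invariant relation without repeated coordinates is full, which is
proved by induction on the number of coordinates. Either all coordinates are free, and the
induction leads to a totally reflexive relation, or some coordinate is a function of the others by
an operation which commutes with `f`.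

* Totally reflexive relations of arity at least three are full: otherwise, the complement of a
  maximal proper symmetric one has an exchange property, and exchange sets lead under preimages by
  the arguments of `f` to a cycle of equivalence relations with respect to which `f` depends on one
  argument only. Since there are no congruences and automorphisms, composing `f` with itself around
  the cycle then gives an element on which `f` is idempotent, that is, a one-element subuniverse.
* Operations of at least two variables commuting with `f` are projections: otherwise, identifying
  variables yields projections, leaving (as for Świerczkowski's lemma) only the case of a Maltsev
  operation, which makes `(A; f)` affine, with a translation as automorphism or a one-element
  subuniverse.
-/

universe u

/-- The type of finitary operations (of positive arity `n + 1`) on `A`. -/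
abbrev Ops (A : Type u) : Type u := Σ n : ℕ, (Fin (n + 1) → A) → A

/-- A set of finitary operations on `A` is a clone if it contains all projection
operations and is closed under composition. -/
def IsClone {A : Type u} (C : Set (Ops A)) : Prop :=
  (∀ (n : ℕ) (i : Fin (n + 1)), (⟨n, fun x => x i⟩ : Ops A) ∈ C) ∧
  ∀ (n m : ℕ) (f : (Fin (n + 1) → A) → A) (g : Fin (n + 1) → (Fin (m + 1) → A) → A),
    (⟨n, f⟩ : Ops A) ∈ C → (∀ i, (⟨m, g i⟩ : Ops A) ∈ C) →
    (⟨m, fun x => f fun i => g i x⟩ : Ops A) ∈ C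

/-- The clone generated by a set `F` of operations: the least clone containing `F`. -/
def cloneGen {A : Type u} (F : Set (Ops A)) : Set (Ops A) :=
  ⋂₀ {C : Set (Ops A) | IsClone C ∧ F ⊆ C}

/-- The clone of all projection operations on `A`. -/
def projClone (A : Type u) : Set (Ops A) :=
  {f : Ops A | ∃ i : Fin (f.1 + 1), f.2 = fun x => x i}

/-- A clone `M` is maximal if it is a proper subclone of the clone of all operations
and the clone of all operations is the only clone properly containing it. -/
def IsMaximalClone {A : Type u} (M : Set (Ops A)) : Prop :=
  IsClone M ∧ M ≠ Set.univ ∧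
    ∀ D : Set (Ops A), IsClone D → M ⊆ D → D = M ∨ D = Set.univ

/-- A clone `C` is minimal if the clone of projections is its unique proper subclone. -/
def IsMinimalClone {A : Type u} (C : Set (Ops A)) : Prop :=
  IsClone C ∧ C ≠ projClone A ∧
    ∀ D : Set (Ops A), IsClone D → D ⊆ C → D = projClone A ∨ D = C

/-- An `n`-ary operation `f` preserves a `k`-ary relation `ρ` if applying `f`
coordinatewise to tuples from `ρ` always yields a tuple in `ρ`. -/
def Preserves {A : Type u} {n k : ℕ} (f : (Fin n → A) → A) (ρ : Set (Fin k → A)) : Prop :=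
  ∀ t : Fin n → Fin k → A, (∀ i, t i ∈ ρ) → (fun j => f fun i => t i j) ∈ ρ

/-- `Pol ρ` is the clone of all operations preserving the relation `ρ`. -/
def Pol {A : Type u} {k : ℕ} (ρ : Set (Fin k → A)) : Set (Ops A) :=
  {f : Ops A | Preserves f.2 ρ}

open Function Set

universe v

section Relations

variable {A : Type u} {ι I : Type*}

/-- `B` is a subuniverse of the algebra `(A; f)`. -/
def IsSubuniverse (f : (ι → A) → A) (B : Set A) : Prop :=
  ∀ x : ι → A, (∀ k, x k ∈ B) → f x ∈ B

/-- The relation `r` is compatible with the operations `g` and `f`, that is, it is a subuniverse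
of the product of the algebras `(U; g)` and `(A; f)`. -/
def Compat {U : Type*} (g : (ι → U) → U) (f : (ι → A) → A) (r : U → A → Prop) : Prop :=
  ∀ u x, (∀ k, r (u k) (x k)) → r (g u) (f x)

/-- `R` is an invariant relation of `(A; f)`. The tuples of `R` are the columns of the matrix `z`,
so that `f ∘ z` is the tuple of the values of `f` on the rows. -/
def InvRel (f : (ι → A) → A) (R : Set (I → A)) : Prop :=
  ∀ z : I → ι → A, (∀ k, (fun i => z i k) ∈ R) → f ∘ z ∈ R

/-- `R` contains every tuple with a repeated entry. -/
def TotallyReflexive (R : Set (I → A)) : Prop :=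
  ∀ x : I → A, ¬ Injective x → x ∈ R

/-- `R` is closed under permuting the entries of its tuples. -/
def TotallySymmetric (R : Set (I → A)) : Prop :=
  ∀ π : Equiv.Perm I, ∀ x ∈ R, x ∘ π ∈ R

/-- `R` is an invariant totally reflexive relation of `(A; f)`. -/
structure ReflInvRel (f : (ι → A) → A) (R : Set (I → A)) : Prop where
  inv : InvRel f R
  refl : TotallyReflexive R

/-- The only totally reflexive invariant relation of arity `t` is the full one. -/
def ReflexiveFull (f : (ι → A) → A) (t : ℕ) : Prop :=
  ∀ R : Set (Fin t → A), ReflInvRel f R → R = univ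

/-- The algebra `(A; f)` has no nontrivial subuniverses, congruences or automorphisms. -/
structure Rigid (f : (ι → A) → A) : Prop where
  sub : ∀ B : Set A, IsSubuniverse f B → B.Nonempty → B = univ
  con : ∀ s : Setoid A, Compat f f s → s = ⊥ ∨ s = ⊤
  aut : ∀ π : Equiv.Perm A, (∀ x, π (f x) = f (π ∘ x)) → π = 1

end Relations

namespace Rigid

variable {A : Type u} {ι : Type*} {f : (ι → A) → A}

theorem surjective [Nonempty A] (hf : Rigid f) : Surjective f :=
  range_eq_univ.1 <| hf.sub (range f) (fun x _ => mem_range_self x) (range_nonempty f)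

theorem not_idempotent [Nontrivial A] (hf : Rigid f) (a : A) : f (const ι a) ≠ a := by
  intro ha
  have hsub : IsSubuniverse f {a} := fun x hx => by rw [funext hx]; exact ha
  obtain ⟨b, hb⟩ := exists_ne a
  exact hb <| eq_univ_iff_forall.1 (hf.sub {a} hsub (singleton_nonempty a)) b

theorem forall_mem (hf : Rigid f) {B : Set A} (hB : IsSubuniverse f B) {a : A} (ha : a ∈ B)
    (b : A) : b ∈ B :=
  eq_univ_iff_forall.1 (hf.sub B hB ⟨a, ha⟩) b

end Rigid

section CommonWitness

variable {A : Type u} {ι : Type*} {f : (ι → A) → A}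

theorem exists_comp_eq_of_not_injective {α : Type*} {t : ℕ} {x : Fin (t + 1) → α}
    (hx : ¬ Injective x) : ∃ (y : Fin t → α) (ρ : Fin (t + 1) → Fin t), y ∘ ρ = x := by
  obtain ⟨a, b, hab, hne⟩ := not_injective_iff.1 hx
  have hcover : ∀ i, ∃ c, x (b.succAbove c) = x i := by
    intro i
    obtain rfl | hi := eq_or_ne i b
    · obtain ⟨c, rfl⟩ := Fin.exists_succAbove_eq hne
      exact ⟨c, hab⟩
    · obtain ⟨c, rfl⟩ := Fin.exists_succAbove_eq hi
      exact ⟨c, rfl⟩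
  choose ρ hρ using hcover
  exact ⟨x ∘ b.succAbove, ρ, funext hρ⟩

/-- The tuples of length `t` admitting a common witness for all their re-indexings form a totally
reflexive invariant relation, so that `s` can be increased up to the size of `A`. -/
theorem exists_common_witness [Finite A] [Nonempty A] {U H : Type*} {g : (ι → U) → U}
    {P : U → (H → A) → Prop}
    (hP : ∀ (u : ι → U) (z : H → ι → A), (∀ k, P (u k) fun i => z i k) → P (g u) (f ∘ z))
    {s : ℕ} (hs : ∀ z : Fin s → A, ∃ u, ∀ ρ : H → Fin s, P u (z ∘ ρ))
    (hT : ∀ t, s < t → ReflexiveFull f t) : ∃ u, ∀ z, P u z := by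
  have grow : ∀ t, s ≤ t → ∀ z : Fin t → A, ∃ u, ∀ ρ : H → Fin t, P u (z ∘ ρ) := by
    intro t ht
    induction t, ht using Nat.le_induction with
    | base => exact hs
    | succ t ht ih =>
      refine eq_univ_iff_forall.1 <| hT (t + 1) (Nat.lt_succ_of_le ht)
        {z | ∃ u, ∀ ρ : H → Fin (t + 1), P u (z ∘ ρ)} ⟨fun z hz => ?_, fun x hx => ?_⟩
      · choose u hu using hz
        exact ⟨g u, fun ρ => hP u (z ∘ ρ) fun k => hu k ρ⟩
      · obtain ⟨y, τ, rfl⟩ := exists_comp_eq_of_not_injective hx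
        exact (ih y).imp fun u hu ρ => hu (τ ∘ ρ)
  have e : A ↪ Fin (max s (Nat.card A)) :=
    (Finite.equivFin A).toEmbedding.trans (Fin.castLEEmb (le_max_right _ _))
  obtain ⟨u, hu⟩ := grow _ (le_max_left _ _) (invFun e)
  refine ⟨u, fun z => ?_⟩
  simpa [← comp_assoc, invFun_comp e.injective] using hu (e ∘ z)

theorem exists_forall_of_pairs [Finite A] [Nonempty A] (hT : ∀ t, 2 < t → ReflexiveFull f t)
    {U : Type*} {g : (ι → U) → U} {r : U → A → Prop} (hr : Compat g f r)
    (hpair : ∀ a b, ∃ u, r u a ∧ r u b) : ∃ u, ∀ a, r u a := by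
  have hpair' (z : Fin 2 → A) : ∃ u, ∀ i, r u (z i) := by
    simpa only [Fin.forall_fin_two] using hpair (z 0) (z 1)
  obtain ⟨u, hu⟩ := exists_common_witness (H := Unit) (P := fun u z => r u (z ()))
    (fun u z => hr u (z ())) (fun z => (hpair' z).imp fun u hu ρ => hu (ρ ())) hT
  exact ⟨u, fun a => hu fun _ => a⟩

end CommonWitness

section Exchange

variable {A : Type u} {ι I : Type*} {f : (ι → A) → A}

theorem InvRel.update_mem [DecidableEq I] {R : Set (I → A)} (hR : InvRel f R) {z : I → ι → A}
    {i : I} {u : ι → A} (h : ∀ k, update (fun j => z j k) i (u k) ∈ R) :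
    update (f ∘ z) i (f u) ∈ R := by
  rw [← comp_update]
  refine hR _ fun k => ?_
  convert h k using 1
  exact comp_update (fun r : ι → A => r k) z i u

theorem update_comp_mem [Finite I] [DecidableEq I] {σ : Set (I → A)} (hrefl : TotallyReflexive σ)
    (hsymm : TotallySymmetric σ) {x : I → A} {u : A} (h : ∀ i, update x i u ∈ σ) (ρ : I → I)
    (i : I) : update (x ∘ ρ) i u ∈ σ := by
  by_cases hinj : Injective (update (x ∘ ρ) i u)
  · have hρ : InjOn ρ {i}ᶜ := by
      intro a ha b hb hab
      apply hinj
      rw [update_of_ne ha, update_of_ne hb, comp_apply, comp_apply, hab]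
    have := Fintype.ofFinite I
    obtain ⟨e, he⟩ := MapsTo.exists_equiv_extend_of_card_eq (t := Finset.univ) rfl (by simp) hρ
    let π : Equiv.Perm I := e.trans (Equiv.subtypeUnivEquiv Finset.mem_univ)
    have hπ : update (x ∘ ρ) i u = update x (π i) u ∘ π := by
      rw [update_comp_equiv, Equiv.symm_apply_apply]
      refine update_eq_iff.2 ⟨by rw [update_self], fun j hj => ?_⟩
      rw [update_of_ne hj]
      exact congrArg x (he j hj).symm
    rw [hπ]
    exact hsymm π _ (h (π i))
  · exact hrefl _ hinj

/-- `σ` is a proper invariant relation of `(A; f)` that is totally reflexive and totally symmetric.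
The maximal ones among these relations have an exchange property. -/
structure IsProperSymmRel (f : (ι → A) → A) (σ : Set (I → A)) : Prop extends ReflInvRel f σ where
  symm : TotallySymmetric σ
  ne_univ : σ ≠ univ

theorem IsProperSymmRel.not_forall_update_mem [Nonempty A] {h : ℕ} [NeZero h] (hf : Rigid f)
    {σ : Set (Fin h → A)} (hσ : IsProperSymmRel f σ) (u : A) : ∃ z i, update z i u ∉ σ := by
  by_contra! hu
  have hsub : IsSubuniverse f {u | ∀ z i, update z i u ∈ σ} := by
    intro x hx z i
    choose w hw using fun r => hf.surjective (z r)
    obtain rfl : f ∘ w = z := funext hw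
    exact hσ.inv.update_mem fun k => hx k _ i
  refine hσ.ne_univ (eq_univ_of_forall fun z => ?_)
  simpa using hf.forall_mem hsub hu (z 0) z 0

theorem exists_update_notMem_of_maximal [Finite A] [Nonempty A] (hf : Rigid f) {h : ℕ} [NeZero h]
    (hT : ∀ t, h < t → ReflexiveFull f t) {σ : Set (Fin h → A)}
    (hσ : Maximal (IsProperSymmRel f) σ) {x : Fin h → A} (hx : x ∉ σ) (u : A) :
    ∃ i, update x i u ∉ σ := by
  obtain ⟨⟨hinv, hrefl⟩, hsymm, -⟩ := hσ.prop
  set Q : Set (Fin h → A) := {x | ∃ u, ∀ i, update x i u ∈ σ}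
  have hσQ : σ ⊆ Q := by
    refine fun x hx => ⟨x 0, fun i => ?_⟩
    obtain rfl | hi := eq_or_ne i 0
    · rwa [update_eq_self]
    · exact hrefl _ fun hinj => hi (hinj (by rw [update_self, update_of_ne hi.symm]))
  have hQinv : InvRel f Q := by
    intro z hz
    choose u hu using hz
    exact ⟨f u, fun i => hinv.update_mem fun k => hu k i⟩
  have hQsymm : TotallySymmetric Q :=
    fun π x ⟨u, hu⟩ => ⟨u, update_comp_mem hrefl hsymm hu π⟩
  have hQ_ne : Q ≠ univ := by
    intro hQu
    obtain ⟨u, hu⟩ := exists_common_witness (g := f) (P := fun u z => ∀ i, update z i u ∈ σ)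
      (fun u z h i => hinv.update_mem fun k => h k i)
      (fun z => (hQu.ge (mem_univ z)).imp fun u => update_comp_mem hrefl hsymm) hT
    obtain ⟨z, i, hz⟩ := hσ.prop.not_forall_update_mem hf u
    exact hz (hu z i)
  by_contra! hu
  exact hx <| hσ.le_of_ge ⟨⟨hQinv, fun x hx => hσQ (hrefl x hx)⟩, hQsymm, hQ_ne⟩ hσQ ⟨u, hu⟩

end Exchange

section ExchangeFamily

variable {A : Type u} {ι I : Type*} {f : (ι → A) → A} {σ : Set (I → A)}

theorem not_injective_of_forall_eq_or_eq [Fintype I] (hI : 3 ≤ Fintype.card I) {x : I → A}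
    {a b : A} (h : ∀ i, x i = a ∨ x i = b) : ¬ Injective x := by
  classical
  intro hx
  have := Finset.card_le_card_of_injOn (s := Finset.univ) (t := {a, b}) x
    (fun i _ => by simpa using h i) hx.injOn
  have := Finset.card_le_two (a := a) (b := b)
  rw [Finset.card_univ] at *
  omega

theorem TotallyReflexive.mem_of_forall_eq_or_eq (hσ : TotallyReflexive σ) {x y : I → A}
    (hx : x ∈ σ) {p : I} (h : ∀ r, y r = x r ∨ y r = x p) : y ∈ σ := by
  by_contra hy
  have hinj : Injective y := not_not.1 (mt (hσ y) hy)
  have hp : y p = x p := (h p).elim id id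
  refine hy ((funext fun r => ?_ : y = x) ▸ hx)
  refine (h r).elim id fun hr => ?_
  rwa [hinj (hr.trans hp.symm)]

variable [DecidableEq I]

/-- `H` is a nonempty set of tuples outside `σ` having the exchange property: each element of `A`
may replace some entry of each tuple of `H`. -/
structure IsExchange (σ H : Set (I → A)) : Prop where
  nonempty : H.Nonempty
  notMem : ∀ x ∈ H, x ∉ σ
  exch : ∀ x ∈ H, ∀ u, ∃ i, update x i u ∈ H

/-- The tuples that `f` carries into `H` when placed in the `j`-th argument, for some common choice
of the other arguments. -/
def pull [DecidableEq ι] (f : (ι → A) → A) (j : ι) (H : Set (I → A)) : Set (I → A) :=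
  {t | ∃ c : ι → A, (fun i => f (update c j (t i))) ∈ H}

/-- Two elements are related if they are interchangeable for membership in `H`. -/
def interchange (H : Set (I → A)) : Setoid A where
  r a b := ∀ x i, update x i a ∈ H ↔ update x i b ∈ H
  iseqv := ⟨fun _ _ _ => Iff.rfl, fun h x i => (h x i).symm, fun h h' x i => (h x i).trans (h' x i)⟩

variable {H : Set (I → A)}

/-- The exchange property allows replacing some row of the matrix `z` by `w`; it must be the `a`-th
row, as all other replacements lead into `σ`. -/
theorem IsExchange.comp_update_mem (hσ : InvRel f σ) (hH : IsExchange σ H) {z : I → ι → A}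
    (hz : f ∘ z ∈ H) {a : I} {w : ι → A}
    (hcol : ∀ i ≠ a, ∀ k, (fun r => update z i w r k) ∈ σ) : f ∘ update z a w ∈ H := by
  obtain ⟨i, hi⟩ := hH.exch _ hz (f w)
  rw [← comp_update] at hi
  obtain rfl | hia := eq_or_ne i a
  · exact hi
  · exact absurd (hσ _ (hcol i hia)) (hH.notMem _ hi)

theorem IsExchange.comp_mem_of_columns [Finite I] (hσ : InvRel f σ) (hH : IsExchange σ H)
    {z z' : I → ι → A} (hz : f ∘ z ∈ H) (hcol : ∀ (S : Finset I), ∀ a ∉ S, ∀ i ≠ a, ∀ k,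
      (fun r => update (S.piecewise z' z) i (z' a) r k) ∈ σ) : f ∘ z' ∈ H := by
  cases nonempty_fintype I
  suffices ∀ S : Finset I, f ∘ S.piecewise z' z ∈ H by simpa using this Finset.univ
  intro S
  induction S using Finset.induction_on with
  | empty => simpa using hz
  | insert a S ha ih =>
    rw [Finset.piecewise_insert]
    exact hH.comp_update_mem hσ ih (hcol S a ha)

theorem mem_iff_of_interchange [Finite I] {x y : I → A} (hxy : ∀ i, interchange H (x i) (y i)) :
    x ∈ H ↔ y ∈ H := by
  cases nonempty_fintype I
  suffices ∀ S : Finset I, x ∈ H ↔ S.piecewise y x ∈ H by simpa using this Finset.univ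
  intro S
  induction S using Finset.induction_on with
  | empty => simp
  | insert a S ha ih =>
    rw [ih, Finset.piecewise_insert, ← hxy a, ← S.piecewise_eq_of_notMem y x ha, update_eq_self]

variable [DecidableEq ι]

/-- Among the matrices that `f` carries into `H`, take one with the fewest columns outside `σ`, and
exchange one of its rows for a row agreeing with the `p`-th one outside of column `j`. -/
theorem IsExchange.exists_pull_nonempty [Finite ι] [Finite I] [Nontrivial I]
    (hsurj : Surjective f) (hσ : ReflInvRel f σ) (hH : IsExchange σ H) :
    ∃ j, (pull f j H).Nonempty := by
  have hex : ∃ z : I → ι → A, f ∘ z ∈ H := by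
    obtain ⟨x, hx⟩ := hH.nonempty
    choose z hz using fun i => hsurj (x i)
    exact ⟨z, (funext hz : f ∘ z = x) ▸ hx⟩
  obtain ⟨z, hzH, hmin⟩ := exists_minimalFor_of_wellFoundedLT (fun z : I → ι → A => f ∘ z ∈ H)
    (fun z => {k | (fun r => z r k) ∉ σ}) hex
  obtain ⟨j, hj⟩ : ∃ j, (fun r => z r j) ∉ σ := by
    by_contra! hcol
    exact hH.notMem _ hzH (hσ.inv z hcol)
  obtain ⟨p, q, hpq⟩ := exists_pair_ne I
  obtain ⟨i, hi⟩ := hH.exch _ hzH (f (update (z p) j (z q j)))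
  rw [← comp_update] at hi
  have hip : i ≠ p := by
    rintro rfl
    refine hmin hi (fun k hk hkσ => hk ?_) hj (hσ.refl _ fun hinj => hpq (hinj ?_))
    · obtain rfl | hkj := eq_or_ne k j
      · exact absurd hkσ hj
      · convert hkσ using 2 with r
        obtain rfl | hr := eq_or_ne r i <;> simp [*]
    · simp [hpq.symm]
  set z' := update z i (update (z p) j (z q j))
  have hz' : ∀ k ≠ j, (fun r => z' r k) ∈ σ := fun k hk =>
    hσ.refl _ fun hinj => hip (hinj (by simp [z', hip.symm, hk]))
  refine ⟨j, fun r => z' r j, z' p, hH.comp_mem_of_columns hσ.inv hi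
    (z' := fun r => update (z' p) j (z' r j)) fun S a ha i hia k => ?_⟩
  obtain rfl | hk := eq_or_ne k j
  · exact hσ.refl _ fun hinj => hia (hinj (by simp [ha, hia.symm]))
  · refine hσ.refl.mem_of_forall_eq_or_eq (hz' k hk) (p := p) fun r => ?_
    obtain rfl | hr := eq_or_ne r i
    · simp [hk]
    · by_cases hrS : r ∈ S <;> simp [hr, hrS, hk]

variable [Fintype I]

theorem IsExchange.comp_update_mem_of_rows (hI : 3 ≤ Fintype.card I) (hσ : ReflInvRel f σ)
    (hH : IsExchange σ H) {j : ι} {t : I → A} {c c' : ι → A} {C D : I → ι → A}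
    (hC : ∀ i, C i = c ∨ C i = c') (hD : ∀ i, D i = c ∨ D i = c')
    (h : (fun i => f (update (C i) j (t i))) ∈ H) : (fun i => f (update (D i) j (t i))) ∈ H := by
  refine hH.comp_mem_of_columns hσ.inv h (z' := fun i => update (D i) j (t i))
    fun S a ha i hi k => hσ.refl _ ?_
  obtain rfl | hk := eq_or_ne k j
  · exact fun hinj => hi (hinj (by simp [ha, hi.symm]))
  · refine not_injective_of_forall_eq_or_eq hI (a := c k) (b := c' k) fun r => ?_
    have hrow (r) : (C r k = c k ∨ C r k = c' k) ∧ (D r k = c k ∨ D r k = c' k) :=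
      ⟨(hC r).imp (congrFun · k) (congrFun · k), (hD r).imp (congrFun · k) (congrFun · k)⟩
    obtain rfl | hr := eq_or_ne r i
    · simpa [hk] using (hrow a).2
    · by_cases hrS : r ∈ S <;> simp [hr, hrS, hk, hrow]

theorem IsExchange.mem_pull_iff (hI : 3 ≤ Fintype.card I) (hσ : ReflInvRel f σ)
    (hH : IsExchange σ H) {j : ι} {t : I → A} {c c' : ι → A} {C : I → ι → A}
    (hC : ∀ i, C i = c ∨ C i = c') :
    t ∈ pull f j H ↔ (fun i => f (update (C i) j (t i))) ∈ H := by
  refine ⟨fun ⟨d, hd⟩ => ?_, fun h => ⟨c, ?_⟩⟩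
  · have hc : (fun i => f (update c j (t i))) ∈ H :=
      hH.comp_update_mem_of_rows (C := fun _ => d) (D := fun _ => c) hI hσ
        (fun _ => .inl rfl) (fun _ => .inr rfl) hd
    exact hH.comp_update_mem_of_rows (C := fun _ => c) hI hσ (fun _ => .inl rfl) hC hc
  · exact hH.comp_update_mem_of_rows (D := fun _ => c) hI hσ hC (fun _ => .inl rfl) h

theorem IsExchange.pull_of_nonempty (hI : 3 ≤ Fintype.card I) (hσ : ReflInvRel f σ)
    (hH : IsExchange σ H) {j : ι} (hne : (pull f j H).Nonempty) : IsExchange σ (pull f j H) := by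
  refine ⟨hne, fun t ⟨c, hc⟩ ht => hH.notMem _ hc (hσ.inv _ fun k => ?_), fun t ⟨c, hc⟩ u => ?_⟩
  · obtain rfl | hk := eq_or_ne k j
    · simpa using ht
    · exact hσ.refl _ (not_injective_of_forall_eq_or_eq hI (a := c k) (b := c k) (by simp [hk]))
  · refine (hH.exch _ hc (f (update c j u))).imp fun i hi => ⟨c, ?_⟩
    convert hi using 1
    exact comp_update (fun v => f (update c j v)) t i u

end ExchangeFamily

section PeriodicEquivalences

variable {A : Type u} {ι : Type*} {f : (ι → A) → A}

theorem Rigid.eq_of_forall_rel (hf : Rigid f) {X : Type*} {θ : X → Setoid A}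
    (hmap : ∀ x y, (∀ k i, θ i (x k) (y k)) → ∀ i, θ i (f x) (f y)) {i₀ : X} (hθ : θ i₀ ≠ ⊤)
    {a b : A} (hab : ∀ i, θ i a b) : a = b := by
  let s : Setoid A :=
    { r := fun a b => ∀ i, θ i a b
      iseqv := ⟨fun a i => (θ i).refl a, fun h i => (θ i).symm (h i),
        fun h h' i => (θ i).trans (h i) (h' i)⟩ }
  have hsab : s a b := hab
  obtain hbot | htop := hf.con s hmap
  · rwa [hbot] at hsab
  · refine absurd (Setoid.eq_top_iff.2 fun a b => ?_) hθ
    have hsab : s a b := htop ▸ trivial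
    exact hsab i₀

variable {Γ : Type*} [Group Γ] [MulAction Γ A] {γ : Γ} {θ : Setoid A} {l : Γ → ι}

theorem Rigid.eq_of_forall_smul_rel (hf : Rigid f) (hθ : θ ≠ ⊤)
    (hl : ∀ g x, θ (g • f x) ((g * γ) • x (l g))) {a b : A} (hab : ∀ g : Γ, θ (g • a) (g • b)) :
    a = b :=
  hf.eq_of_forall_rel (θ := fun g : Γ => θ.comap (g • ·)) (i₀ := 1) (fun x y hxy g =>
    θ.trans (hl g x) (θ.trans (hxy (l g) (g * γ)) (θ.symm (hl g y))))
    (fun h => hθ (Setoid.eq_top_iff.2 fun a b => by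
      simpa [Setoid.comap_rel] using Setoid.eq_top_iff.1 h a b)) hab

theorem exists_smul_rel (hl : ∀ g x, θ (g • f x) ((g * γ) • x (l g))) (m : ℕ) :
    ∀ a : (Fin m → ι) → A, ∃ y, ∀ g, θ (g • y) ((g * γ ^ m) • a fun r => l (g * γ ^ (r : ℕ))) := by
  induction m with
  | zero => exact fun a => ⟨a Fin.elim0, fun g => by
      rw [pow_zero, mul_one, Subsingleton.elim (fun r : Fin 0 => l (g * γ ^ (r : ℕ))) Fin.elim0]⟩
  | succ m ih =>
    intro a
    choose y hy using fun j : ι => ih fun w => a (Fin.cons j w)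
    refine ⟨f y, fun g => θ.trans (hl g y) ?_⟩
    convert hy (l g) (g * γ) using 2
    · rw [pow_succ', mul_assoc]
    · refine congrArg a (funext fun r => ?_)
      cases r using Fin.cases with
      | zero => simp
      | succ r => simp [pow_succ', mul_assoc]

/-- If `f` is, up to each translate of `θ`, a translation of one of its arguments, then
composing `f` with itself along the orbit of `γ` produces an element `y` all of whose translates
are `θ`-related, and `y` is an idempotent. -/
theorem Rigid.false_of_forall_smul_rel [Nontrivial A] [Finite Γ] (hf : Rigid f) (hθ : θ ≠ ⊤)
    (hγ : ∀ g : Γ, g ∈ Subgroup.zpowers γ)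
    (hl : ∀ g x, θ (g • f x) ((g * γ) • x (l g))) : False := by
  have hcomm (g h : Γ) : Commute g h := by
    obtain ⟨m, rfl⟩ := hγ g
    obtain ⟨n, rfl⟩ := hγ h
    exact Commute.zpow_zpow_self γ m n
  let w : Γ → Fin (orderOf γ) → ι := fun g r => l (g * γ ^ (r : ℕ))
  have hw {g h : Γ} (hgh : w g = w h) (k : Γ) : l (g * k) = l (h * k) := by
    obtain ⟨r, rfl⟩ := mem_powers_iff_mem_zpowers.2 (hγ k)
    simpa [w, pow_mod_orderOf] using congrFun hgh ⟨r % orderOf γ, Nat.mod_lt _ (orderOf_pos γ)⟩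
  have hfactors (α : A) : (fun g : Γ => g⁻¹ • α).FactorsThrough w := by
    intro g h hgh
    have haut : MulAction.toPerm (h * g⁻¹) = (1 : Equiv.Perm A) := by
      refine hf.aut _ fun x => hf.eq_of_forall_smul_rel hθ hl fun k => ?_
      have hk : l (k * (h * g⁻¹)) = l k := by
        rw [(hcomm k _).eq, mul_assoc, ← hw hgh, mul_inv_cancel_left]
      have hleft := hl (k * (h * g⁻¹)) x
      have hright := hl k (MulAction.toPerm (h * g⁻¹) ∘ x)
      rw [hk, (hcomm (k * (h * g⁻¹)) γ).eq, ← mul_assoc γ k, (hcomm γ k).eq, mul_smul k,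
        mul_smul (k * γ)] at hleft
      exact θ.trans hleft (θ.symm hright)
    exact eq_inv_smul_iff.2 (by simpa [mul_smul] using DFunLike.congr_fun haut α)
  obtain ⟨α⟩ : Nonempty A := inferInstance
  obtain ⟨y, hy⟩ := exists_smul_rel hl (orderOf γ) (extend w (fun g => g⁻¹ • α) fun _ => α)
  have hyα (g : Γ) : θ (g • y) α := by
    have := hy g
    rwa [pow_orderOf_eq_one, mul_one, (hfactors α).extend_apply, smul_inv_smul] at this
  refine hf.not_idempotent y (hf.eq_of_forall_smul_rel hθ hl fun g => ?_)
  exact θ.trans (hl g _) (θ.trans (hyα _) (θ.symm (hyα g)))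

theorem Rigid.false_of_perm_setoids [Finite A] [Nontrivial A] (hf : Rigid f) {X : Type*} [Finite X]
    {θ : X → Setoid A} {l : X → ι} {ν : Equiv.Perm X}
    (hmap : ∀ i x y, θ (ν i) (x (l i)) (y (l i)) → θ i (f x) (f y))
    (hker : ∀ i a b, θ i (f (const ι a)) (f (const ι b)) → θ (ν i) a b) {i₀ : X}
    (hθ : θ i₀ ≠ ⊤) : False := by
  have hinj : Injective fun a => f (const ι a) := by
    intro a b hab
    refine hf.eq_of_forall_rel (fun x y hxy i => hmap i x y (hxy _ _)) hθ fun i => ?_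
    rw [← ν.apply_symm_apply i]
    have hab : f (const ι a) = f (const ι b) := hab
    exact hker _ a b (by rw [hab])
  let G : Equiv.Perm A := Equiv.ofBijective _ (Finite.injective_iff_bijective.1 hinj)
  have hpow (n : ℕ) (i : X) (a b : A) : θ i ((G ^ n) a) ((G ^ n) b) ↔ θ ((ν ^ n) i) a b := by
    induction n generalizing a b with
    | zero => rfl
    | succ n ih =>
      rw [pow_succ, Equiv.Perm.mul_apply, Equiv.Perm.mul_apply, ih, pow_succ', Equiv.Perm.mul_apply]
      exact ⟨hker _ a b, hmap _ (const ι a) (const ι b)⟩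
  let Γ := Subgroup.zpowers ((G, ν) : Equiv.Perm A × Equiv.Perm X)
  let _ : MulAction Γ A := MulAction.compHom A ((MonoidHom.fst _ _).comp Γ.subtype)
  refine hf.false_of_forall_smul_rel (Γ := Γ) (γ := ⟨(G, ν), Subgroup.mem_zpowers _⟩)
    (l := fun g => l (g.1.2 i₀)) hθ (fun g => ?_) ?_
  · obtain ⟨n, hn⟩ := g.2
    exact ⟨n, Subtype.ext hn⟩
  · rintro ⟨g, hg⟩ x
    obtain ⟨n, rfl⟩ := mem_powers_iff_mem_zpowers.2 hg
    exact (hpow n i₀ _ _).2 (hmap _ x (const ι (x _)) ((θ _).refl _))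

end PeriodicEquivalences

theorem exists_mem_periodicPts {X : Type*} [Finite X] [Nonempty X] (f : X → X) :
    ∃ x, x ∈ periodicPts f := by
  obtain ⟨i, j, hij, heq⟩ := Finite.exists_ne_map_eq_of_infinite (f^[·] (Classical.arbitrary X))
  wlog hlt : i < j generalizing i j
  · exact this j i hij.symm heq.symm (by omega)
  refine ⟨f^[i] (Classical.arbitrary X), j - i, Nat.sub_pos_of_lt hlt, ?_⟩
  rw [IsPeriodicPt, IsFixedPt, ← iterate_add_apply, Nat.sub_add_cancel hlt.le]
  exact heq.symm

section NoExchange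

variable {A : Type u} {ι I : Type*} [DecidableEq ι] [DecidableEq I]
  {f : (ι → A) → A} {σ H : Set (I → A)}

theorem IsExchange.interchange_ne_top [Nontrivial I] (hσ : TotallyReflexive σ)
    (hH : IsExchange σ H) : interchange H ≠ ⊤ := by
  intro htop
  obtain ⟨x, hx⟩ := hH.nonempty
  obtain ⟨p, q, hpq⟩ := exists_pair_ne I
  have hxp : update x p (x q) ∈ H :=
    (Setoid.eq_top_iff.1 htop (x p) (x q) x p).1 (by rwa [update_eq_self])
  exact hH.notMem _ hxp (hσ _ fun hinj => hpq (hinj (by simp [hpq.symm])))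

variable [Fintype I]

theorem IsExchange.interchange_pull (hI : 3 ≤ Fintype.card I) (hσ : ReflInvRel f σ)
    (hH : IsExchange σ H) {j : ι} {c : ι → A} {a a' : A}
    (h : interchange H (f (update c j a)) (f (update c j a'))) :
    interchange (pull f j H) a a' := by
  intro t i
  have hC (i : I) : (fun _ => c) i = c ∨ (fun _ => c) i = c := .inl rfl
  rw [hH.mem_pull_iff hI hσ hC, hH.mem_pull_iff hI hσ hC]
  convert h (fun r => f (update c j (t r))) i using 2 <;>
    exact comp_update (fun v => f (update c j v)) t i _

theorem IsExchange.injective_quotient_pull (hI : 3 ≤ Fintype.card I) (hσ : ReflInvRel f σ)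
    (hH : IsExchange σ H) (j : ι) (c : ι → A) :
    Injective fun Q : Quotient (interchange (pull f j H)) =>
      (⟦f (update c j Q.out)⟧ : Quotient (interchange H)) :=
  fun _ _ hQ => Quotient.out_equiv_out.1 (hH.interchange_pull hI hσ (Quotient.exact hQ))

theorem IsExchange.card_quotient_pull_le [Finite A] [Nonempty A] (hI : 3 ≤ Fintype.card I)
    (hσ : ReflInvRel f σ) (hH : IsExchange σ H) (j : ι) :
    Nat.card (Quotient (interchange (pull f j H))) ≤ Nat.card (Quotient (interchange H)) :=
  Nat.card_le_card_of_injective _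
    (hH.injective_quotient_pull hI hσ j (const ι (Classical.arbitrary A)))

theorem IsExchange.exists_interchange [Finite A] (hI : 3 ≤ Fintype.card I) (hσ : ReflInvRel f σ)
    (hH : IsExchange σ H) {j : ι} (hcard : Nat.card (Quotient (interchange H)) ≤
      Nat.card (Quotient (interchange (pull f j H)))) (c : ι → A) (b : A) :
    ∃ a, interchange H (f (update c j a)) b := by
  have hbij := (hH.injective_quotient_pull hI hσ j c).bijective_of_nat_card_le hcard
  obtain ⟨Q, hQ⟩ := hbij.2 ⟦b⟧
  exact ⟨Q.out, Quotient.exact hQ⟩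

theorem IsExchange.interchange_of_pull [Finite A] (hI : 3 ≤ Fintype.card I) (hσ : ReflInvRel f σ)
    (hH : IsExchange σ H) {j : ι} (hcard : Nat.card (Quotient (interchange H)) ≤
      Nat.card (Quotient (interchange (pull f j H)))) {x y : ι → A}
    (hxy : interchange (pull f j H) (x j) (y j)) : interchange H (f x) (f y) := by
  intro t s
  choose w hw using fun r => hH.exists_interchange hI hσ hcard x (t r)
  have hC (d : ι → A) (i : I) : update (const I x) s d i = x ∨ update (const I x) s d i = d := by
    obtain rfl | hi := eq_or_ne i s <;> simp [*]
  have hmem (d : ι → A) : update t s (f d) ∈ H ↔ update w s (d j) ∈ pull f j H := by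
    rw [hH.mem_pull_iff hI hσ (hC d)]
    refine mem_iff_of_interchange fun r => ?_
    obtain rfl | hr := eq_or_ne r s
    · simp
    · simpa [hr] using (interchange H).symm (hw r)
  rw [hmem, hmem]
  exact hxy w s

end NoExchange

section Reflexive

variable {A : Type u} {ι : Type*} {f : (ι → A) → A} [Finite A] [Nontrivial A] [Finite ι]

/-- Following the exchange sets with the fewest interchangeability classes under taking preimages
leads to a cycle, along which `f` depends on one argument only, up to interchangeability. -/
theorem Rigid.not_isExchange (hf : Rigid f) {I : Type*} [Fintype I] [DecidableEq I]
    (hI : 3 ≤ Fintype.card I) {σ H : Set (I → A)} (hσ : ReflInvRel f σ) : ¬ IsExchange σ H := by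
  classical
  intro hH
  have : Nontrivial I := Fintype.one_lt_card_iff_nontrivial.1 (by omega)
  let IsMin := MinimalFor (IsExchange σ) fun H => Nat.card (Quotient (interchange H))
  have : Nonempty {H // IsMin H} :=
    let ⟨H, hH⟩ := exists_minimalFor_of_wellFoundedLT (IsExchange σ) _ ⟨H, hH⟩
    ⟨⟨H, hH⟩⟩
  choose l hl using fun H : {H // IsMin H} => H.2.1.exists_pull_nonempty hf.surjective hσ
  have hpull (H : {H // IsMin H}) : IsMin (pull f (l H) H) :=
    ⟨H.2.1.pull_of_nonempty hI hσ (hl H), fun K hK hKH =>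
      (H.2.1.card_quotient_pull_le hI hσ _).trans
        (H.2.2 hK (hKH.trans (H.2.1.card_quotient_pull_le hI hσ _)))⟩
  let next (H : {H // IsMin H}) : {H // IsMin H} := ⟨pull f (l H) H, hpull H⟩
  have hmap (H : {H // IsMin H}) (x y : ι → A)
      (hxy : interchange (next H).1 (x (l H)) (y (l H))) : interchange H.1 (f x) (f y) :=
    H.2.1.interchange_of_pull hI hσ
      (H.2.2 (hpull H).1 (H.2.1.card_quotient_pull_le hI hσ _)) hxy
  obtain ⟨K, hK⟩ := exists_mem_periodicPts next
  refine hf.false_of_perm_setoids (X := periodicPts next) (θ := fun K => interchange K.1.1)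
    (l := fun K => l K) (ν := (bijOn_periodicPts next).equiv) (fun H => hmap H)
    (fun H a b hab => ?_) (i₀ := ⟨K, hK⟩) (K.2.1.interchange_ne_top hσ.refl)
  refine H.1.2.1.interchange_pull hI hσ (c := const ι a) ?_
  have ha : update (const ι a) (l H) a = const ι a := update_eq_self _ _
  rw [ha]
  exact (interchange _).trans hab ((interchange _).symm (hmap H _ _ (by simp)))

/-- Descending induction on the arity, starting above the size of `A`, where no tuple is
injective. -/
theorem Rigid.reflexiveFull (hf : Rigid f) {t : ℕ} (ht : 3 ≤ t) : ReflexiveFull f t := by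
  classical
  induction hk : Nat.card A + 1 - t using Nat.strong_induction_on generalizing t with | _ k ih =>
  intro R hR
  by_contra hne
  obtain ⟨x, hx⟩ := (ne_univ_iff_exists_notMem R).1 hne
  have hinj : Injective x := not_not.1 (mt (hR.refl x) hx)
  have htA : t ≤ Nat.card A := by simpa using Nat.card_le_card_of_injective x hinj
  have hproper : IsProperSymmRel f {x | ∀ π : Equiv.Perm (Fin t), x ∘ π ∈ R} :=
    { inv := fun z hz π => hR.inv (z ∘ π) fun k => hz k π
      refl := fun x hx π => hR.refl _ (mt (Injective.of_comp_iff' x π.bijective).1 hx)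
      symm := fun π x hx π' => hx (π * π')
      ne_univ := fun h => hx (h.ge (mem_univ x) 1) }
  obtain ⟨σ, -, hσ⟩ := (toFinite {σ | IsProperSymmRel f σ}).exists_le_maximal hproper
  have : NeZero t := ⟨by omega⟩
  refine hf.not_isExchange (H := σᶜ) (by simpa using ht) hσ.prop.toReflInvRel
    ⟨nonempty_compl.2 hσ.prop.ne_univ, fun _ => id, fun x hx u =>
      exists_update_notMem_of_maximal hf (fun s hs => ?_) hσ hx u⟩
  exact ih (Nat.card A + 1 - s) (by omega) (by omega) rfl

theorem ReflInvRel.eq_univ {I : Type*} [Fintype I] (hf : Rigid f) (hI : 3 ≤ Fintype.card I)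
    {R : Set (I → A)} (hR : ReflInvRel f R) : R = univ := by
  have e := Fintype.equivFin I
  have hfull := hf.reflexiveFull hI {x | x ∘ e ∈ R}
    ⟨fun z hz => hR.inv (z ∘ e) hz, fun x hx =>
      hR.refl _ (mt (Injective.of_comp_iff' x e.bijective).1 hx)⟩
  refine eq_univ_of_forall fun x => ?_
  have hx : (x ∘ e.symm) ∘ e ∈ R := hfull.ge (mem_univ (x ∘ e.symm))
  rwa [comp_assoc, e.symm_comp_self] at hx

theorem forall_of_diagonals₃ (hf : Rigid f) {P : A → A → A → Prop}
    (hP : ∀ x y z : ι → A, (∀ k, P (x k) (y k) (z k)) → P (f x) (f y) (f z))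
    (h01 : ∀ x z, P x x z) (h02 : ∀ x y, P x y x) (h12 : ∀ x y, P x y y) (x y z : A) :
    P x y z := by
  refine (hf.reflexiveFull le_rfl {x : Fin 3 → A | P (x 0) (x 1) (x 2)}
    ⟨fun z hz => hP _ _ _ hz, fun x hx => ?_⟩).ge (mem_univ ![x, y, z])
  obtain ⟨i, j, hij, hne⟩ := not_injective_iff.1 hx
  fin_cases i <;> fin_cases j <;> simp_all

theorem forall_of_diagonals₄ (hf : Rigid f) {P : A → A → A → A → Prop}
    (hP : ∀ x y z w : ι → A, (∀ k, P (x k) (y k) (z k) (w k)) → P (f x) (f y) (f z) (f w))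
    (h01 : ∀ x y z, P x x y z) (h02 : ∀ x y z, P x y x z) (h03 : ∀ x y z, P x y z x)
    (h12 : ∀ x y z, P x y y z) (h13 : ∀ x y z, P x y z y) (h23 : ∀ x y z, P x y z z)
    (x y z w : A) : P x y z w := by
  refine (hf.reflexiveFull (by norm_num) {x : Fin 4 → A | P (x 0) (x 1) (x 2) (x 3)}
    ⟨fun z hz => hP _ _ _ _ hz, fun x hx => ?_⟩).ge (mem_univ ![x, y, z, w])
  obtain ⟨i, j, hij, hne⟩ := not_injective_iff.1 hx
  fin_cases i <;> fin_cases j <;> simp_all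

end Reflexive

section Binary

variable {A : Type u} {ι : Type*} {f : (ι → A) → A}

theorem Rigid.endo_eq_self [Finite A] (hf : Rigid f) {μ : A → A} (hμ : ∀ x, μ (f x) = f (μ ∘ x))
    (a : A) : μ a = a := by
  have hsurj : Surjective μ := by
    refine hf.forall_mem (B := range μ) (fun x hx => ?_) (mem_range_self a)
    choose y hy using hx
    exact ⟨f y, by rw [hμ, show μ ∘ y = x from funext hy]⟩
  exact DFunLike.congr_fun
    (hf.aut (Equiv.ofBijective μ ⟨Finite.injective_iff_surjective.2 hsurj, hsurj⟩) hμ) a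

variable [Finite A] [Nontrivial A] [Finite ι]

/-- A maximal proper symmetric relation has the exchange property, which for binary relations is
transitivity. -/
theorem Rigid.eq_or_forall_of_refl_symm (hf : Rigid f) {r : A → A → Prop} (hr : Compat f f r)
    (hrefl : ∀ a, r a a) (hsymm : ∀ a b, r a b → r b a) :
    (∀ a b, r a b → a = b) ∨ ∀ a b, r a b := by
  by_contra! hcon
  obtain ⟨⟨a₀, b₀, hab, hne⟩, a₁, b₁, hn⟩ := hcon
  have hR : IsProperSymmRel f {x : Fin 2 → A | r (x 0) (x 1)} :=
    { inv := fun z hz => hr _ _ hz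
      refl := fun x hx => by
        obtain ⟨i, j, hij, hne⟩ := not_injective_iff.1 hx
        fin_cases i <;> fin_cases j <;> simp_all
      symm := fun π x hx => by
        obtain rfl | rfl : π = 1 ∨ π = Equiv.swap 0 1 := by revert π; decide
        · exact hx
        · exact hsymm _ _ hx
      ne_univ := fun h => hn (h.ge (mem_univ ![a₁, b₁])) }
  obtain ⟨σ, hrσ, hσ⟩ := (toFinite {σ | IsProperSymmRel f σ}).exists_le_maximal hR
  have hpair (x : Fin 2 → A) : ![x 0, x 1] = x := by ext i; fin_cases i <;> rfl
  let s : Setoid A :=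
    { r := fun a b => ![a, b] ∈ σ
      iseqv.refl := fun a => hσ.prop.refl _ fun hinj => absurd (@hinj 0 1 rfl) (by decide)
      iseqv.symm := fun {a b} h => by
        have hswap := hσ.prop.symm (Equiv.swap 0 1) _ h
        rwa [← hpair (![a, b] ∘ Equiv.swap 0 1)] at hswap
      iseqv.trans := fun {a b c} hab hbc => by
        by_contra hac
        obtain ⟨i, hi⟩ := exists_update_notMem_of_maximal hf (fun t ht => hf.reflexiveFull ht)
          hσ hac b
        rw [← hpair (update ![a, c] i b)] at hi
        fin_cases i
        · exact hi hbc
        · exact hi hab }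
  have hs : Compat f f s := fun x y hxy => by
    have hmem := hσ.prop.inv ![x, y] fun k => by rw [← hpair fun i => ![x, y] i k]; exact hxy k
    rwa [← hpair (f ∘ ![x, y])] at hmem
  obtain hbot | htop := hf.con s hs
  · exact hne ((Setoid.ext_iff.1 hbot _ _).1 (hrσ (a := ![a₀, b₀]) hab))
  · exact hσ.prop.ne_univ (eq_univ_of_forall fun x => hpair x ▸ Setoid.eq_top_iff.1 htop _ _)

theorem Rigid.eq_or_forall (hf : Rigid f) {r : A → A → Prop} (hr : Compat f f r) :
    (∀ a b, r a b → a = b) ∨ ∀ a b, r a b := by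
  by_contra! hcon
  obtain ⟨⟨a₀, b₀, hab, hne⟩, a₁, b₁, hn⟩ := hcon
  have hdom : ∀ a, ∃ b, r a b := by
    refine hf.forall_mem (B := {a | ∃ b, r a b}) (fun x hx => ?_) ⟨b₀, hab⟩
    choose y hy using hx
    exact ⟨f y, hr x y hy⟩
  have hcod : ∀ b, ∃ a, r a b := by
    refine hf.forall_mem (B := {b | ∃ a, r a b}) (fun y hy => ?_) ⟨a₀, hab⟩
    choose x hx using hy
    exact ⟨f x, hr x y hx⟩
  obtain heq | hfull := hf.eq_or_forall_of_refl_symm (r := fun a b => ∃ u, r u a ∧ r u b)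
    (fun x y hxy => by
      choose u hux huy using hxy
      exact ⟨f u, hr u x hux, hr u y huy⟩)
    (fun a => (hcod a).imp fun u hu => ⟨hu, hu⟩) (fun a b hab => hab.imp fun u => And.symm)
  · choose π hπ using hdom
    have hid : π a₀ = a₀ :=
      hf.endo_eq_self (fun x => heq _ _ ⟨f x, hπ _, hr _ _ fun k => hπ _⟩) a₀
    exact hne (hid ▸ heq _ _ ⟨a₀, hπ a₀, hab⟩)
  · obtain ⟨u, hu⟩ := exists_forall_of_pairs (fun t ht => hf.reflexiveFull ht) hr hfull
    refine hn (hf.forall_mem (B := {u | ∀ x, r u x}) (fun x hx b => ?_) hu a₁ b₁)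
    obtain ⟨y, rfl⟩ := hf.surjective b
    exact hr x y fun k => hx k _

theorem Rigid.injective_or_exists_const (hf : Rigid f) {U : Type*} {g : (ι → U) → U}
    {μ : A → U → A} (hμ : ∀ x u, μ (f x) (g u) = f fun k => μ (x k) (u k)) :
    (∀ u, Injective (μ · u)) ∨ ∃ u c, ∀ x, μ x u = c := by
  obtain heq | hfull := hf.eq_or_forall (r := fun x y => ∃ u, μ x u = μ y u) fun x y hxy => by
    choose u hu using hxy
    exact ⟨g u, by rw [hμ, hμ, funext hu]⟩
  · exact .inl fun u x y hxy => heq x y ⟨u, hxy⟩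
  · obtain ⟨⟨u, c⟩, huc⟩ := exists_forall_of_pairs (fun t ht => hf.reflexiveFull ht)
      (g := fun w : ι → U × A => (g fun k => (w k).1, f fun k => (w k).2))
      (r := fun w x => μ x w.1 = w.2) (fun w x hw => (hμ _ _).trans (congrArg f (funext hw)))
      (fun a b => (hfull a b).elim fun u hu => ⟨(u, μ b u), hu, rfl⟩)
    exact .inr ⟨u, c, huc⟩

theorem Rigid.eq_snd_or_injective (hf : Rigid f) {μ : A → A → A}
    (hμ : ∀ x y, μ (f x) (f y) = f fun k => μ (x k) (y k)) :
    (∀ x y, μ x y = y) ∨ ∀ y, Injective (μ · y) := by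
  refine (hf.injective_or_exists_const hμ).symm.imp_left fun ⟨u, c, huc⟩ => ?_
  have hcompat : Compat f f fun y c => ∀ x, μ x y = c := fun y c hyc x => by
    obtain ⟨x, rfl⟩ := hf.surjective x
    rw [hμ]
    exact congrArg f (funext fun k => hyc k _)
  obtain heq | hfull := hf.eq_or_forall hcompat
  · obtain rfl := heq u c huc
    have hsnd : ∀ y x, μ x y = y :=
      hf.forall_mem (B := {y | ∀ x, μ x y = y}) (fun y hy => hcompat y y hy) huc
    exact fun x y => hsnd y x
  · obtain ⟨a, b, hab⟩ := exists_pair_ne A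
    exact absurd ((hfull a a a).symm.trans (hfull a b a)) hab

end Binary

section Maltsev

variable {A : Type u} {ι : Type*} {f : (ι → A) → A} {p : A → A → A → A}

/-- `p` is a Maltsev operation which is a homomorphism from the cube of `(A; f)` to `(A; f)`. -/
structure IsMaltsevHom (f : (ι → A) → A) (p : A → A → A → A) : Prop where
  map : ∀ x y z, p (f x) (f y) (f z) = f fun k => p (x k) (y k) (z k)
  left : ∀ a b, p a a b = b
  right : ∀ a b, p a b b = a

namespace IsMaltsevHom

variable [Finite A] [Nontrivial A] [Finite ι]

theorem symm (hf : Rigid f) (hp : IsMaltsevHom f p) : ∀ x y z, p x y z = p z y x :=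
  forall_of_diagonals₃ hf (fun x y z h => by rw [hp.map, hp.map, funext h])
    (by simp [hp.left, hp.right]) (by simp) (by simp [hp.left, hp.right])

theorem injective (hf : Rigid f) (hp : IsMaltsevHom f p) (a b : A) :
    Injective fun v => p v a b := by
  obtain hinj | ⟨⟨a, b⟩, c, hc⟩ := hf.injective_or_exists_const (U := A × A)
    (g := fun w => (f fun k => (w k).1, f fun k => (w k).2)) (μ := fun v w => p v w.1 w.2)
    (fun x w => hp.map x _ _)
  · exact hinj (a, b)
  obtain ⟨a, hconst⟩ : ∃ a, ∃ c, ∀ v, p v a a = c := by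
    obtain heq | hfull := hf.eq_or_forall (r := fun a b => ∃ c, ∀ v, p v a b = c)
      fun x y hxy => by
        choose c hc using hxy
        refine ⟨f c, fun v => ?_⟩
        obtain ⟨v, rfl⟩ := hf.surjective v
        rw [hp.map, funext fun k => hc k (v k)]
    · obtain rfl := heq a b ⟨c, hc⟩
      exact ⟨a, c, hc⟩
    · exact ⟨a, hfull a a⟩
  obtain ⟨c, hc⟩ := hconst
  obtain ⟨x, y, hxy⟩ := exists_pair_ne A
  exact absurd (by rw [← hp.right x a, ← hp.right y a, hc, hc]) hxy

/-- In an abelian group, `x ↦ 2 * o - x` is the operation `nu o`, and `μ` takes midpoints; the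
Maltsev operation `nu (μ x z) y` is `x - y + z`. -/
theorem exists_reflection (hf : Rigid f) (hp : IsMaltsevHom f p) :
    ∃ q, IsMaltsevHom f q ∧ ∀ a b, q a b (q b a b) = b := by
  have hex (o x : A) : ∃ v, p v o x = o := Finite.injective_iff_surjective.1 (hp.injective hf o x) o
  choose nu hnu using hex
  have hnu_map (x y : ι → A) : nu (f x) (f y) = f fun k => nu (x k) (y k) :=
    hp.injective hf (f x) (f y) (by simp only [hnu, hp.map])
  have hnu_nu (o x : A) : nu o (nu o x) = x :=
    hp.injective hf o (nu o x) ((hnu o _).trans ((hp.symm hf x o _).trans (hnu o x)).symm)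
  obtain hsnd | hinj := hf.eq_snd_or_injective hnu_map
  · have hrefl (o x : A) : p x o x = o := by simpa only [hsnd] using hnu o x
    exact ⟨p, hp, fun a b => by rw [hrefl, hrefl]⟩
  have hex (a c : A) : ∃ m, nu m a = c := Finite.injective_iff_surjective.1 (hinj a) c
  choose μ hμ using hex
  have hμ_eq {m a c : A} (h : nu m a = c) : μ a c = m := hinj a ((hμ a c).trans h.symm)
  have hμ' (a c : A) : nu (μ a c) c = a := by
    simpa only [hμ] using hnu_nu (μ a c) a
  have hμ_map (x y : ι → A) : μ (f x) (f y) = f fun k => μ (x k) (y k) :=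
    hμ_eq (by simp only [hnu_map, hμ])
  refine ⟨fun x y z => nu (μ x z) y, ⟨fun x y z => ?_, hμ, fun a b => hμ' a b⟩, fun a b => ?_⟩
  · simp only [hμ_map, hnu_map]
  · simp only [hμ_eq rfl, hμ]

variable (hf : Rigid f) (hp : IsMaltsevHom f p) (hrefl : ∀ a b, p a b (p b a b) = b)
include hf hp hrefl

theorem comp_swap : ∀ v a b, p (p v a b) b a = v :=
  forall_of_diagonals₃ hf (fun x y z h => by rw [hp.map, hp.map, funext h])
    (by simp [hp.left]) (fun b a => by rw [hp.symm hf, hrefl]) (by simp [hp.right])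

theorem comp : ∀ v a b c, p (p v a b) b c = p v a c :=
  forall_of_diagonals₄ hf (fun x y z w h => by rw [hp.map, hp.map, hp.map, funext h])
    (by simp [hp.left])
    (forall_of_diagonals₃ hf (P := fun b a c => p (p b a b) b c = p b a c)
      (fun x y z h => by rw [hp.map, hp.map, hp.map, funext h])
      (by simp [hp.left]) (by simp [hp.right]) (by simp [hp.comp_swap hf hrefl, hp.right]))
    (forall_of_diagonals₃ hf (P := fun c a b => p (p c a b) b c = p c a c)
      (fun x y z h => by rw [hp.map, hp.map, hp.map, funext h])
      (by simp [hp.left]) (by simp [hp.right]) (by simp [hp.right]))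
    (by simp [hp.right]) (by simp [hp.comp_swap hf hrefl, hp.right]) (by simp [hp.right])

theorem comp_right (v a' a b : A) : p v a' (p a' a b) = p v a b := by
  rw [hp.symm hf v, hp.symm hf a', hp.comp hf hrefl, hp.symm hf]

/-- In an abelian group with `p x y z = x - y + z`, the two cases say that the map
`x ↦ f (x, …, x) - x + o` takes the value `o`, so that `f` has an idempotent, or takes the same
value at two points `x ≠ y`, so that the translation by `y - x` commutes with `f`. -/
theorem false_of_reflection : False := by
  obtain ⟨o⟩ : Nonempty A := inferInstance
  by_cases hinj : Injective fun x => p (f (const ι x)) x o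
  · obtain ⟨x, hx : p (f (const ι x)) x o = o⟩ := Finite.injective_iff_surjective.1 hinj o
    refine hf.not_idempotent x ?_
    rw [← hp.comp_swap hf hrefl (f (const ι x)) x o, hx, hp.left]
  obtain ⟨x, y, hxy, hne⟩ := not_injective_iff.1 hinj
  have htrans (v : A) : p v x y = p v (f (const ι x)) (f (const ι y)) := by
    let w := p (f (const ι x)) x o
    have hw : p (p v x y) (f (const ι y)) w = p v (f (const ι x)) w :=
      calc p (p v x y) (f (const ι y)) w
        _ = p (p v x y) (f (const ι y)) (p (f (const ι y)) y o) := by simp only [w, hxy]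
        _ = p v x o := by rw [hp.comp_right hf hrefl, hp.comp hf hrefl]
        _ = p v (f (const ι x)) w := (hp.comp_right hf hrefl _ _ _ _).symm
    rw [← hp.comp_swap hf hrefl (p v x y) (f (const ι y)) w, hw, hp.comp hf hrefl]
  have hid : p x x y = x := hf.endo_eq_self (μ := fun v => p v x y)
    (fun v => by rw [htrans, hp.map]; rfl) x
  exact hne (hid.symm.trans (hp.left x y))

end IsMaltsevHom

variable [Finite A] [Nontrivial A] [Finite ι]

theorem Rigid.not_isMaltsevHom (hf : Rigid f) : ¬ IsMaltsevHom f p := fun hp =>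
  let ⟨_, hq, hrefl⟩ := hp.exists_reflection hf
  hq.false_of_reflection hf hrefl

theorem Rigid.exists_not_injective_right (hf : Rigid f) {φ : A → A → A}
    (hφ : ∀ x y, φ (f x) (f y) = f fun k => φ (x k) (y k)) (hleft : ∀ y, Injective (φ · y)) :
    ∃ x, ¬ Injective (φ x) := by
  by_contra! hright
  have hid (x : A) : φ x x = x := hf.endo_eq_self (μ := fun x => φ x x) (fun x => hφ x x) x
  choose rd hrd using fun x y => Finite.injective_iff_surjective.1 (hleft y) x
  choose ld hld using fun y z => Finite.injective_iff_surjective.1 (hright y) z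
  have hrd_map (x y : ι → A) : rd (f x) (f y) = f fun k => rd (x k) (y k) :=
    hleft (f y) (by simp only [hrd, hφ])
  have hld_map (x y : ι → A) : ld (f x) (f y) = f fun k => ld (x k) (y k) :=
    hright (f x) (by simp only [hld, hφ])
  have hrd_self (x : A) : rd x x = x := hleft x (by simp only [hrd, hid])
  have hld_self (x : A) : ld x x = x := hright x (by simp only [hld, hid])
  refine hf.not_isMaltsevHom (p := fun x y z => φ (rd x y) (ld y z)) ⟨fun x y z => ?_, ?_, ?_⟩
  · simp only [hrd_map, hld_map, hφ]
  · simp only [hrd_self, hld, implies_true]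
  · simp only [hld_self, hrd, implies_true]

theorem Rigid.eq_fst_or_eq_snd (hf : Rigid f) {φ : A → A → A}
    (hφ : ∀ x y, φ (f x) (f y) = f fun k => φ (x k) (y k)) :
    (∀ x y, φ x y = x) ∨ ∀ x y, φ x y = y := by
  obtain hsnd | hleft := hf.eq_snd_or_injective hφ
  · exact .inr hsnd
  obtain hfst | hright := hf.eq_snd_or_injective (μ := fun y x => φ x y) fun y x => hφ x y
  · exact .inl fun x y => hfst y x
  · obtain ⟨x, hx⟩ := hf.exists_not_injective_right hφ hleft
    exact absurd (hright x) hx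

end Maltsev

section Irredundant

variable {A : Type u} {ι : Type*} {f : (ι → A) → A}

/-- No two coordinates agree on all tuples of `R`. -/
def Irredundant {I : Type*} (R : Set (I → A)) : Prop :=
  ∀ i j, i ≠ j → ∃ x ∈ R, x i ≠ x j

/-- The only nonempty irredundant invariant relation on the coordinates `I` is the full one. -/
def IrredundantFull (f : (ι → A) → A) (I : Type v) : Prop :=
  ∀ R : Set (I → A), InvRel f R → R.Nonempty → Irredundant R → R = univ

theorem exists_merge {J : Type*} {a b : J} (hab : a ≠ b) :
    ∃ ρ : J → {j // j ≠ b}, ∀ x : J → A, x a = x b → (fun j => x (ρ j)) = x := by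
  classical
  refine ⟨fun j => if h : j = b then ⟨a, hab⟩ else ⟨j, h⟩, fun x hx => funext fun j => ?_⟩
  obtain rfl | hj := eq_or_ne j b
  · simp [hx]
  · simp [hj]

variable {J : Type v} [Fintype J]
  (hJ : ∀ (I : Type v) [Fintype I], Fintype.card I ≤ Fintype.card J → IrredundantFull f I)
include hJ

/-- Identifying the coordinates which agree on all of `D` makes `D` irredundant. -/
theorem const_mem_of_irredundantFull {D : Set (J → A)} (hD : InvRel f D) (hne : D.Nonempty)
    (a : A) : const J a ∈ D := by
  classical
  let s : Setoid J :=
    { r := fun i j => ∀ x ∈ D, x i = x j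
      iseqv := ⟨fun _ _ _ => rfl, fun h x hx => (h x hx).symm,
        fun h h' x hx => (h x hx).trans (h' x hx)⟩ }
  have hlift {x} (hx : x ∈ D) : ∃ y : Quotient s → A, y ∘ Quotient.mk s = x :=
    ⟨Quotient.lift x fun i j h => h x hx, rfl⟩
  refine (hJ (Quotient s) (Fintype.card_quotient_le s) {y | y ∘ Quotient.mk s ∈ D}
    (fun z hz => hD (z ∘ Quotient.mk s) hz) ?_ ?_).ge (mem_univ (const _ a))
  · obtain ⟨x, hx⟩ := hne
    obtain ⟨y, rfl⟩ := hlift hx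
    exact ⟨y, hx⟩
  · refine Quotient.ind₂ fun i j hij => ?_
    have hdist : ¬ ∀ x ∈ D, x i = x j := fun h => hij (Quotient.sound h)
    push Not at hdist
    obtain ⟨x, hx, hxij⟩ := hdist
    obtain ⟨y, rfl⟩ := hlift hx
    exact ⟨y, hx, hxij⟩

end Irredundant

section Projections

variable {A : Type u} {ι : Type*} {J : Type v} {f : (ι → A) → A} {φ : (J → A) → A}

/-- The operations `f` and `φ` commute, that is, `φ` is a homomorphism from a power of `(A; f)` to
`(A; f)`. -/
def Commutes (f : (ι → A) → A) (φ : (J → A) → A) : Prop :=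
  ∀ z : J → ι → A, φ (f ∘ z) = f fun k => φ fun j => z j k

/-- `φ` agrees with the projection to the coordinate `c` on the tuples that are constant on `s`. -/
def ProjOn (φ : (J → A) → A) (s : Finset J) (c : J) : Prop :=
  ∀ x : J → A, (∀ i ∈ s, ∀ j ∈ s, x i = x j) → φ x = x c

theorem ProjOn.of_mem {s : Finset J} {c d : J} (h : ProjOn φ s c) (hc : c ∈ s) (hd : d ∈ s) :
    ProjOn φ s d :=
  fun x hx => (h x hx).trans (hx c hc d hd)

theorem projOn_pair_iff [DecidableEq J] {a b c : J} :
    ProjOn φ {a, b} c ↔ ∀ x : J → A, x a = x b → φ x = x c := by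
  refine forall_congr' fun x => imp_congr_left ⟨fun h => h a (by simp) b (by simp), fun h => ?_⟩
  simp [h]

theorem ProjOn.exists_ne [Nontrivial A] {s : Finset J} {c i j : J} (h : ProjOn φ s c) (hij : i ≠ j)
    (hi : i ∉ s) : ∃ x, φ x = x c ∧ x i ≠ x j := by
  classical
  obtain ⟨a, b, hab⟩ := exists_pair_ne A
  refine ⟨update (const J a) i b, h _ fun k hk l hl => ?_, by simpa [hij.symm] using hab.symm⟩
  rw [update_of_ne (ne_of_mem_of_not_mem hk hi), update_of_ne (ne_of_mem_of_not_mem hl hi)]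
  rfl

/-- Otherwise `φ` is on `{a, b}` both the projection to `a` and the projection to `b`, so that only
the projection to `c` is left for both `{a, c}` and `{b, c}`. -/
theorem projOn_pair_of_forall_notMem [DecidableEq J] {a b c : J} (hab : a ≠ b) (hac : a ≠ c)
    (hbc : b ≠ c) (hall : ∀ j ∉ ({a, b} : Finset J), j = c)
    (hex : ∀ s : Finset J, s.card = 2 → ∃ d, ProjOn φ s d)
    (huniq : ∀ s s' : Finset J, s.card = 2 → s'.card = 2 → ∀ d, ProjOn φ s d → ProjOn φ s' d →
      s = s') : ProjOn φ {a, b} c := by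
  by_contra hnot
  obtain ⟨d, hd⟩ := hex {a, b} (Finset.card_pair hab)
  have hdab : d ∈ ({a, b} : Finset J) := by_contra fun h => hnot (hall d h ▸ hd)
  have hforce (s : Finset J) (hs : s.card = 2) (hcs : c ∈ s) : ProjOn φ s c := by
    obtain ⟨e, he⟩ := hex s hs
    by_cases heab : e ∈ ({a, b} : Finset J)
    · have hs_eq := huniq _ _ hs (Finset.card_pair hab) e he (hd.of_mem hdab heab)
      simp [hs_eq, hac.symm, hbc.symm] at hcs
    · exact hall e heab ▸ he
  have heq := huniq {a, c} {b, c} (Finset.card_pair hac) (Finset.card_pair hbc) c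
    (hforce _ (Finset.card_pair hac) (by simp)) (hforce _ (Finset.card_pair hbc) (by simp))
  have ha : a ∈ ({b, c} : Finset J) := heq ▸ Finset.mem_insert_self a {c}
  simp [hab, hac] at ha

variable [Fintype J]

theorem Commutes.exists_eq_proj_of_card_eq_two [Finite A] [Nontrivial A] [Finite ι] (hf : Rigid f)
    (hφ : Commutes f φ) (hJ2 : Fintype.card J = 2) : ∃ c, ∀ x, φ x = x c := by
  classical
  obtain ⟨a, b, hab, huniv⟩ := Finset.card_eq_two.1 hJ2
  have hall (j : J) : j = a ∨ j = b := by
    have hj := Finset.mem_univ j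
    simpa [huniv] using hj
  have hpair (x : J → A) : (fun j => if j = a then x a else x b) = x := by
    funext j
    obtain rfl | rfl := hall j <;> simp [hab.symm]
  obtain hfst | hsnd := hf.eq_fst_or_eq_snd (φ := fun x y => φ fun j => if j = a then x else y)
    fun x y => by simpa [comp_def, apply_ite f, ite_apply] using hφ fun j => if j = a then x else y
  · exact ⟨a, fun x => by simpa only [hpair] using hfst (x a) (x b)⟩
  · exact ⟨b, fun x => by simpa only [hpair] using hsnd (x a) (x b)⟩

variable
  (hJ : ∀ (I : Type v) [Fintype I], Fintype.card I ≤ Fintype.card J → IrredundantFull f I)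
include hJ

/-- Otherwise the graph of the operation obtained from `φ` by identifying the two coordinates in
`s` is irredundant. -/
theorem Commutes.exists_projOn [Nontrivial A] (hφ : Commutes f φ) {s : Finset J}
    (hs : s.card = 2) : ∃ c, ProjOn φ s c := by
  classical
  obtain ⟨a, b, hab, rfl⟩ := Finset.card_eq_two.1 hs
  by_contra! hno
  obtain ⟨ρ, hρ⟩ := exists_merge (A := A) hab
  obtain ⟨a₀, a₁, ha⟩ := exists_pair_ne A
  let G : Set (Option {j // j ≠ b} → A) := {y | φ (fun j => y (some (ρ j))) = y none}
  have hG (x : {j // j ≠ b} → A) : (fun o => o.elim (φ fun j => x (ρ j)) x) ∈ G := rfl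
  have hcard : Fintype.card (Option {j // j ≠ b}) ≤ Fintype.card J := by
    rw [Fintype.card_option]
    exact Fintype.card_subtype_lt (x := b) (by simp)
  have hnone (c : {j // j ≠ b}) : ∃ y ∈ G, y none ≠ y (some c) := by
    have hc := hno c.1
    rw [projOn_pair_iff] at hc
    push Not at hc
    obtain ⟨x, hx, hne⟩ := hc
    exact ⟨_, hG fun j => x j, by simpa [hρ x hx] using hne⟩
  have hirr : Irredundant G := by
    rintro (_ | c) (_ | d) hcd
    · exact absurd rfl hcd
    · exact hnone d
    · exact (hnone c).imp fun y hy => ⟨hy.1, hy.2.symm⟩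
    · have hdc : d ≠ c := fun h => hcd (h ▸ rfl)
      exact ⟨_, hG (update (const _ a₀) c a₁), by simpa [hdc] using ha.symm⟩
  have hfull : G = univ := hJ _ hcard G
    (fun z hz => (hφ fun j => z (some (ρ j))).trans (congrArg f (funext hz)))
    ⟨_, hG (const _ a₀)⟩ hirr
  have hvalue (z : A) : φ (const J a₀) = z :=
    hfull.ge (mem_univ fun o : Option {j // j ≠ b} => o.elim z (const _ a₀))
  exact ha ((hvalue a₀).symm.trans (hvalue a₁))

/-- Otherwise the relation `φ x = x c` is irredundant, as any two coordinates are separated by a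
tuple that is constant on `s` or by one that is constant on `s'`. -/
theorem Commutes.eq_of_projOn [Nontrivial A] (hφ : Commutes f φ) {c : J} (hno : ∃ x, φ x ≠ x c)
    {s s' : Finset J} (hs : s.card = 2) (hs' : s'.card = 2) (hc : ProjOn φ s c)
    (hc' : ProjOn φ s' c) : s = s' := by
  classical
  by_contra hss
  have hdist {t : Finset J} (ht : ProjOn φ t c) {i j : J} (hij : i ≠ j) (hnot : ¬ {i, j} ⊆ t) :
      ∃ x, φ x = x c ∧ x i ≠ x j := by
    obtain hi | hj : i ∉ t ∨ j ∉ t := by simpa [Finset.insert_subset_iff, imp_iff_not_or] using hnot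
    · exact ht.exists_ne hij hi
    · exact (ht.exists_ne hij.symm hj).imp fun x hx => ⟨hx.1, hx.2.symm⟩
  obtain ⟨a⟩ : Nonempty A := inferInstance
  obtain ⟨x, hx⟩ := hno
  refine hx <| (hJ J le_rfl {x | φ x = x c} (fun z hz => (hφ z).trans (congrArg f (funext hz)))
    ⟨const J a, hc _ fun _ _ _ _ => rfl⟩ fun i j hij => ?_).ge (mem_univ x)
  by_cases h : {i, j} ⊆ s
  · refine hdist hc' hij fun h' => hss ?_
    rw [← Finset.eq_of_subset_of_card_le h (by rw [hs, Finset.card_pair hij]),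
      Finset.eq_of_subset_of_card_le h' (by rw [hs', Finset.card_pair hij])]
  · exact hdist hc hij h

/-- Distinct pairs of coordinates select distinct projections, of which there are too few if
`3 < Fintype.card J`. -/
theorem Commutes.card_eq_three [Nontrivial A] (hφ : Commutes f φ) (hJ3 : 3 ≤ Fintype.card J)
    (hno : ∀ c, ∃ x, φ x ≠ x c) : Fintype.card J = 3 := by
  choose C hC using fun s : {s : Finset J // s.card = 2} => hφ.exists_projOn hJ s.2
  have hC_inj : Injective C := fun s s' h =>
    Subtype.ext (hφ.eq_of_projOn hJ (hno (C s)) s.2 s'.2 (hC s) (h ▸ hC s'))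
  have hcard := Fintype.card_le_of_injective C hC_inj
  rw [Fintype.card_finset_len] at hcard
  by_contra hne
  obtain ⟨m, hm⟩ := Nat.exists_eq_add_of_le' (show 4 ≤ Fintype.card J by omega)
  rw [hm, Nat.choose_two_right, Nat.div_le_iff_le_mul_add_pred two_pos] at hcard
  have hlt : 2 * (m + 4) + 1 < (m + 4) * (m + 3) := by nlinarith
  exact hcard.not_gt hlt

theorem Commutes.exists_isMaltsevHom [Nontrivial A] (hφ : Commutes f φ)
    (hJ3 : Fintype.card J = 3) (hno : ∀ c, ∃ x, φ x ≠ x c) : ∃ p, IsMaltsevHom f p := by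
  classical
  obtain ⟨a, b, c, hab, hac, hbc, huniv⟩ := Finset.card_eq_three.1 hJ3
  have hex (s : Finset J) (hs : s.card = 2) : ∃ d, ProjOn φ s d := hφ.exists_projOn hJ hs
  have huniq (s s' : Finset J) (hs : s.card = 2) (hs' : s'.card = 2) (d : J) (hd : ProjOn φ s d)
      (hd' : ProjOn φ s' d) : s = s' := hφ.eq_of_projOn hJ (hno d) hs hs' hd hd'
  have hall (j : J) : j = a ∨ j = b ∨ j = c := by
    have hj := Finset.mem_univ j
    simpa [huniv] using hj
  have hprojc : ProjOn φ {a, b} c :=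
    projOn_pair_of_forall_notMem hab hac hbc (fun j hj => by grind [hall j]) hex huniq
  have hproja : ProjOn φ {b, c} a :=
    projOn_pair_of_forall_notMem hbc hab.symm hac.symm (fun j hj => by grind [hall j]) hex huniq
  rw [projOn_pair_iff] at hprojc hproja
  refine ⟨fun x y z => φ fun j => if j = a then x else if j = b then y else z,
    fun x y z => ?_, fun x y => ?_, fun x y => ?_⟩
  · simpa [comp_def, apply_ite f, ite_apply] using
      hφ fun j => if j = a then x else if j = b then y else z
  · rw [hprojc] <;> simp [hab.symm, hac.symm, hbc.symm]
  · rw [hproja] <;> simp [hab.symm, hac.symm, hbc.symm]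

theorem Commutes.exists_eq_proj [Finite A] [Nontrivial A] [Finite ι] (hf : Rigid f)
    (hφ : Commutes f φ) (hJ2 : 2 ≤ Fintype.card J) : ∃ c, ∀ x, φ x = x c := by
  obtain h2 | h3 := hJ2.eq_or_lt
  · exact hφ.exists_eq_proj_of_card_eq_two hf h2.symm
  by_contra! hno
  obtain ⟨p, hp⟩ := hφ.exists_isMaltsevHom hJ (hφ.card_eq_three hJ h3 hno) hno
  exact hf.not_isMaltsevHom hp

end Projections

section Induction

variable {A : Type u} {ι : Type*} {f : (ι → A) → A} {I : Type v} [Fintype I]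

theorem Rigid.update_const_mem [Nonempty A] [DecidableEq I]
    (ih : ∀ (J : Type v) [Fintype J], Fintype.card J < Fintype.card I → IrredundantFull f J)
    (hf : Rigid f) {R : Set (I → A)} (hR : InvRel f R) {i : I} (hi : ∃ x, ∀ z, update x i z ∈ R)
    (a z : A) : update (const I a) i z ∈ R := by
  have hlt : Fintype.card {j // j ≠ i} < Fintype.card I :=
    Fintype.card_subtype_lt (x := i) (by simp)
  obtain ⟨x, hx, hxa⟩ := const_mem_of_irredundantFull (J := {j // j ≠ i})
    (fun K _ hK => ih K (hK.trans_lt hlt))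
    (D := {y | ∃ x : I → A, (∀ z, update x i z ∈ R) ∧ ∀ j, x j.1 = y j})
    (fun y hy => by
      choose x hx hxy using hy
      refine ⟨fun j => f fun k => x k j, fun z => ?_, fun j => congrArg f (funext (hxy · j))⟩
      obtain ⟨w, rfl⟩ := hf.surjective z
      exact hR.update_mem fun k => hx k (w k))
    (hi.imp' (fun x j => x j.1) fun x hx => ⟨x, hx, fun _ => rfl⟩) a
  have hupd : update (const I a) i z = update x i z :=
    update_eq_iff.2 ⟨(update_self i z x).symm, fun j hj => by
      rw [update_of_ne hj]; exact (hxa ⟨j, hj⟩).symm⟩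
  exact hupd ▸ hx z

variable [Finite A] [Nontrivial A] [Finite ι]

theorem Rigid.irredundantFull_of_card_le_two (hf : Rigid f) (hI : Fintype.card I ≤ 2) :
    IrredundantFull f I := by
  classical
  rintro R hR ⟨x₀, hx₀⟩ hirr
  refine eq_univ_of_forall fun x => ?_
  obtain h0 | h1 | h2 : Fintype.card I = 0 ∨ Fintype.card I = 1 ∨ Fintype.card I = 2 := by omega
  · have := Fintype.card_eq_zero_iff.1 h0
    rwa [Subsingleton.elim x x₀]
  · obtain ⟨i, hall⟩ := Fintype.card_eq_one_iff.1 h1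
    have hsub : IsSubuniverse f {a | ∃ y ∈ R, y i = a} := by
      intro z hz
      choose y hy hyz using hz
      exact ⟨_, hR (fun j k => y k j) hy, congrArg f (funext hyz)⟩
    obtain ⟨y, hy, hyx⟩ := hf.forall_mem hsub ⟨x₀, hx₀, rfl⟩ (x i)
    obtain rfl : y = x := funext fun j => by rw [hall j, hyx]
    exact hy
  · obtain ⟨i, j, hij, huniv⟩ := Finset.card_eq_two.1 h2
    have hcompat : Compat f f fun a b => ∃ y ∈ R, y i = a ∧ y j = b := by
      intro u v huv
      choose y hy hyu hyv using huv
      exact ⟨_, hR (fun j k => y k j) hy, congrArg f (funext hyu), congrArg f (funext hyv)⟩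
    obtain heq | hfull := hf.eq_or_forall hcompat
    · obtain ⟨y, hy, hne⟩ := hirr i j hij
      exact absurd (heq _ _ ⟨y, hy, rfl, rfl⟩) hne
    · obtain ⟨y, hy, hyi, hyj⟩ := hfull (x i) (x j)
      obtain rfl : y = x := funext fun k => by
        have hk : k ∈ ({i, j} : Finset I) := huniv ▸ Finset.mem_univ k
        obtain rfl | rfl : k = i ∨ k = j := by simpa using hk
        exacts [hyi, hyj]
      exact hy

variable
  (ih : ∀ (J : Type v) [Fintype J], Fintype.card J < Fintype.card I → IrredundantFull f J)
include ih

/-- The relation contains all tuples that are constant up to one coordinate, so that by induction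
it is totally reflexive. -/
theorem Rigid.eq_univ_of_forall_exists [DecidableEq I] (hf : Rigid f) (hI : 3 ≤ Fintype.card I)
    {R : Set (I → A)} (hR : InvRel f R) (hfree : ∀ i, ∃ x, ∀ z, update x i z ∈ R) : R = univ := by
  have hconst (i : I) := hf.update_const_mem ih hR (hfree i)
  refine ReflInvRel.eq_univ hf hI ⟨hR, fun x hx => ?_⟩
  obtain ⟨a, b, hxab, hab⟩ := not_injective_iff.1 hx
  obtain ⟨ρ, hρ⟩ := exists_merge (A := A) hab
  obtain ⟨a₀, a₁, ha⟩ := exists_pair_ne A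
  have hsep (i j : {j // j ≠ b}) (hij : i ≠ j) (hia : i.1 ≠ a) :
      ∃ y : {j // j ≠ b} → A, y ∘ ρ ∈ R ∧ y i ≠ y j := by
    let x : I → A := update (const I a₀) i a₁
    have hx : x a = x b := by simp only [x, update_of_ne hia.symm, update_of_ne i.2.symm, const]
    refine ⟨fun j => x j, ?_, ?_⟩
    · rw [show (fun j : {j // j ≠ b} => x j) ∘ ρ = x from hρ x hx]
      exact hconst i a₀ a₁
    · simpa [x, Subtype.coe_injective.ne hij.symm] using ha.symm
  have hmem : ((fun j => x j.1) : {j // j ≠ b} → A) ∈ {y | y ∘ ρ ∈ R} := by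
    refine (ih {j // j ≠ b} (Fintype.card_subtype_lt (x := b) (by simp)) {y | y ∘ ρ ∈ R}
      (fun z hz => hR (z ∘ ρ) hz) ⟨const _ a₀, ?_⟩ fun i j hij => ?_).ge (mem_univ _)
    · have hmem : const I a₀ ∈ R := update_eq_self b (const I a₀) ▸ hconst b a₀ a₀
      exact hmem
    · by_cases hia : i.1 = a
      · have hja : j.1 ≠ a := fun hja => hij (Subtype.ext (hia.trans hja.symm))
        exact (hsep j i hij.symm hja).imp fun y hy => ⟨hy.1, hy.2.symm⟩
      · exact hsep i j hij hia
  exact hρ x hxab ▸ hmem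

/-- If the coordinate `i` is determined by the other ones, it is so by an operation that commutes
with `f`, hence by a projection, and then it always agrees with another coordinate. -/
theorem Rigid.exists_update_mem_of_irredundant [DecidableEq I] (hf : Rigid f)
    (hI : 3 ≤ Fintype.card I) {R : Set (I → A)} (hR : InvRel f R) (hne : R.Nonempty)
    (hirr : Irredundant R) (i : I) :
    ∃ x z z', update x i z ∈ R ∧ update x i z' ∈ R ∧ z ≠ z' := by
  by_contra! huniq
  have hcard : Fintype.card {j // j ≠ i} + 1 = Fintype.card I := by
    rw [Fintype.card_subtype_compl, Fintype.card_subtype_eq]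
    omega
  have hproj (y : {j // j ≠ i} → A) : ∃ x ∈ R, ∀ j, x j.1 = y j := by
    refine (ih {j // j ≠ i} (by omega) {y | ∃ x ∈ R, ∀ j, x j.1 = y j} (fun z hz => ?_) ?_
      fun j k hjk => ?_).ge (mem_univ y)
    · choose x hx hxz using hz
      exact ⟨_, hR (fun j k => x k j) hx, fun j => congrArg f (funext (hxz · j))⟩
    · exact hne.imp' (fun x j => x j.1) fun x hx => ⟨x, hx, fun _ => rfl⟩
    · obtain ⟨x, hx, hxjk⟩ := hirr j k (Subtype.coe_injective.ne hjk)
      exact ⟨fun j => x j, ⟨x, hx, fun _ => rfl⟩, hxjk⟩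
  choose φ hφR hφ using hproj
  have hφi {x : I → A} (hx : x ∈ R) : φ (fun j => x j) i = x i := by
    refine huniq x _ _ ?_ (by rwa [update_eq_self])
    rw [update_eq_iff.2 ⟨rfl, fun j hj => (hφ (fun j => x j) ⟨j, hj⟩).symm⟩]
    exact hφR _
  have hcomm : Commutes f fun y => φ y i := fun z => by
    have h := hφi (hR (fun j k => φ (fun j => z j k) j) fun k => hφR _)
    simpa only [comp_def, hφ] using h
  obtain ⟨c, hc⟩ := hcomm.exists_eq_proj (fun K _ hK => ih K (by omega)) hf (by omega)
  obtain ⟨x, hx, hxi⟩ := hirr i c c.2.symm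
  exact hxi ((hφi hx).symm.trans (hc _))

end Induction

theorem Rigid.irredundantFull {A : Type u} [Finite A] [Nontrivial A] {ι : Type*} [Finite ι]
    {f : (ι → A) → A} (hf : Rigid f) (I : Type v) [Finite I] : IrredundantFull f I := by
  classical
  cases nonempty_fintype I
  induction hk : Fintype.card I using Nat.strong_induction_on generalizing I with | _ k ih =>
  subst hk
  obtain h2 | h3 := Nat.lt_or_ge 2 (Fintype.card I) |>.symm
  · exact hf.irredundantFull_of_card_le_two h2
  intro R hR hne hirr
  have ih' (J : Type v) [Fintype J] (hJ : Fintype.card J < Fintype.card I) : IrredundantFull f J :=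
    ih _ hJ J _ rfl
  refine hf.eq_univ_of_forall_exists ih' h3 hR fun i => ?_
  have hcompat : Compat f f fun z z' => ∃ x, update x i z ∈ R ∧ update x i z' ∈ R := by
    intro z z' hz
    choose x hx hx' using hz
    exact ⟨fun j => f fun k => x k j, hR.update_mem hx, hR.update_mem hx'⟩
  obtain heq | hfull := hf.eq_or_forall hcompat
  · obtain ⟨x, z, z', hz, hz', hzz'⟩ := hf.exists_update_mem_of_irredundant ih' h3 hR hne hirr i
    exact absurd (heq z z' ⟨x, hz, hz'⟩) hzz'
  · exact exists_forall_of_pairs (fun t ht => hf.reflexiveFull ht)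
      (g := fun (x : ι → I → A) j => f fun k => x k j) (fun x z h => hR.update_mem h) hfull

section Clones

variable {A : Type u}

theorem isClone_cloneGen (F : Set (Ops A)) : IsClone (cloneGen F) :=
  ⟨fun n i _ hC => hC.1.1 n i, fun n m f g hf hg C hC =>
    hC.1.2 n m f g (hf C hC) fun i => hg i C hC⟩

theorem subset_cloneGen (F : Set (Ops A)) : F ⊆ cloneGen F :=
  fun _ hx _ hC => hC.2 hx

theorem isClone_pol {k : ℕ} (ρ : Set (Fin k → A)) : IsClone (Pol ρ) :=
  ⟨fun _ i _ ht => ht i, fun _ _ _ g hf hg t ht =>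
    hf (fun i j => g i fun l => t l j) fun i => hg i t ht⟩

theorem cloneGen_subset {F C : Set (Ops A)} (hC : IsClone C) (hF : F ⊆ C) : cloneGen F ⊆ C :=
  sInter_subset_of_mem ⟨hC, hF⟩

/-- The operations of each arity in the generated clone form an irredundant invariant relation,
because they include the projections. -/
theorem Rigid.cloneGen_eq_univ [Finite A] [Nontrivial A] {f : Ops A} (hf : Rigid f.2) :
    cloneGen {f} = univ := by
  have hC := isClone_cloneGen {f}
  refine eq_univ_of_forall fun ⟨m, g⟩ => ?_
  refine (hf.irredundantFull (Fin (m + 1) → A) {x | (⟨m, x⟩ : Ops A) ∈ cloneGen {f}}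
    (fun z hz => ?_) ⟨_, hC.1 m 0⟩ fun x y hxy => ?_).ge (mem_univ g)
  · exact hC.2 f.1 m f.2 (fun k x => z x k) (subset_cloneGen _ rfl) hz
  · obtain ⟨i, hi⟩ := ne_iff.1 hxy
    exact ⟨_, hC.1 m i, hi⟩

theorem Preserves.comp_mem_of_complete {f : Ops A} (hf : cloneGen {f} = univ) {k : ℕ}
    {ρ : Set (Fin k → A)} (hρ : Preserves f.2 ρ) (g : A → A) {x : Fin k → A} (hx : x ∈ ρ) :
    g ∘ x ∈ ρ := by
  have hg : (⟨0, fun y => g (y 0)⟩ : Ops A) ∈ Pol ρ :=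
    cloneGen_subset (isClone_pol ρ) (singleton_subset_iff.2 hρ) (hf.ge (mem_univ _))
  exact hg (fun _ => x) fun _ => hx

theorem not_preserves_graph {f : Ops A} (hf : cloneGen {f} = univ) {π : A → A} {a : A}
    (ha : π a ≠ a) : ¬ Preserves f.2 {x : Fin 2 → A | x 1 = π (x 0)} := by
  intro hP
  have hmem : const A a ∘ ![a, π a] ∈ {x : Fin 2 → A | x 1 = π (x 0)} :=
    hP.comp_mem_of_complete hf _ rfl
  exact ha hmem.symm

theorem not_preserves_equivalence {f : Ops A} (hf : cloneGen {f} = univ) {r : A → A → Prop}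
    (hr : Equivalence r) (hne : r ≠ Eq) {c d : A} (hcd : ¬ r c d) :
    ¬ Preserves f.2 {x : Fin 2 → A | r (x 0) (x 1)} := by
  classical
  intro hP
  obtain ⟨a, b, hab, hrab⟩ : ∃ a b, a ≠ b ∧ r a b := by
    by_contra! h
    refine hne (funext₂ fun a b => propext ⟨not_imp_not.1 (h a b), ?_⟩)
    rintro rfl
    exact hr.refl a
  have hmem : update (const A d) a c ∘ ![a, b] ∈ {x : Fin 2 → A | r (x 0) (x 1)} :=
    hP.comp_mem_of_complete hf _ hrab
  exact hcd (by simpa [hab.symm] using hmem)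

theorem not_preserves_unary {f : Ops A} (hf : cloneGen {f} = univ) {B : Set A} (hB : B.Nonempty)
    (hne : B ≠ univ) : ¬ Preserves f.2 {x : Fin 1 → A | x 0 ∈ B} := by
  intro hP
  obtain ⟨b, hb⟩ := hB
  obtain ⟨c, hc⟩ := (ne_univ_iff_exists_notMem B).1 hne
  have hmem : const A c ∘ ![b] ∈ {x : Fin 1 → A | x 0 ∈ B} := hP.comp_mem_of_complete hf _ hb
  exact hc hmem

end Clones

section Rousseau

variable {A : Type u} {ι : Type*} {f : (ι → A) → A}

theorem comm_pow_apply {π : Equiv.Perm A} (hπ : ∀ x, π (f x) = f (π ∘ x)) (m : ℕ) (x : ι → A) :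
    (π ^ m) (f x) = f (⇑(π ^ m) ∘ x) := by
  induction m with
  | zero => rfl
  | succ m ih => rw [pow_succ', Equiv.Perm.mul_apply, ih, hπ]; rfl

theorem exists_pow_orderOf_prime {G : Type*} [Group G] [Finite G] {g : G} (hg : g ≠ 1) :
    ∃ m, (orderOf (g ^ m)).Prime := by
  obtain ⟨p, hp, hdvd⟩ := Nat.exists_prime_and_dvd (mt orderOf_eq_one_iff.1 hg)
  refine ⟨orderOf g / p, ?_⟩
  rwa [orderOf_pow_orderOf_div (orderOf_pos g).ne' hdvd]

/-- A nontrivial automorphism has a power of prime order, and its fixed points form a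
subuniverse. -/
theorem eq_one_of_no_prime_automorphism [Finite A]
    (hsub : ∀ B : Set A, IsSubuniverse f B → B.Nonempty → B = univ)
    (haut : ∀ π : Equiv.Perm A, (∀ a, π a ≠ a) → (∃ p : ℕ, p.Prime ∧ ∀ a, (π ^ p) a = a) →
      ¬ ∀ x, π (f x) = f (π ∘ x)) {π : Equiv.Perm A} (hπ : ∀ x, π (f x) = f (π ∘ x)) :
    π = 1 := by
  by_contra hne
  obtain ⟨m, hm⟩ := exists_pow_orderOf_prime hne
  have hcomm := comm_pow_apply hπ m
  refine haut (π ^ m) (fun a ha => ?_) ⟨_, hm, fun a => by rw [pow_orderOf_eq_one]; rfl⟩ hcomm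
  have hfix := hsub {a | (π ^ m) a = a}
    (fun x hx => (hcomm x).trans (congrArg f (funext hx))) ⟨a, ha⟩
  have hone : π ^ m = 1 := Equiv.ext (eq_univ_iff_forall.1 hfix)
  exact hm.one_lt.ne' (orderOf_eq_one_iff.2 hone)

end Rousseau

theorem rigid_of_not_preserves {A : Type u} [Finite A] {f : Ops A}
    (haut : ∀ π : Equiv.Perm A, (∀ a, π a ≠ a) → (∃ p : ℕ, p.Prime ∧ ∀ a, (π ^ p) a = a) →
      ¬ Preserves f.2 {x : Fin 2 → A | x 1 = π (x 0)})
    (hcon : ∀ r : A → A → Prop, Equivalence r → r ≠ Eq → (∃ a b, ¬ r a b) →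
      ¬ Preserves f.2 {x : Fin 2 → A | r (x 0) (x 1)})
    (hsub : ∀ B : Set A, B.Nonempty → B ≠ univ → ¬ Preserves f.2 {x : Fin 1 → A | x 0 ∈ B}) :
    Rigid f.2 := by
  have hsub' (B : Set A) (hB : IsSubuniverse f.2 B) (hne : B.Nonempty) : B = univ :=
    by_contra fun h => hsub B hne h fun t ht => hB _ ht
  refine ⟨hsub', fun s hs => ?_, fun π => eq_one_of_no_prime_automorphism hsub' ?_⟩
  · by_contra! hne
    refine hcon s s.iseqv (fun h => hne.1 ?_) ?_ fun t ht => hs _ _ ht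
    · exact Setoid.ext fun a b => iff_of_eq (congrFun₂ h a b)
    · simpa [Setoid.eq_top_iff] using hne.2
  · refine fun π hfree hp hπ => haut π hfree hp fun t ht => ?_
    exact (congrArg f.2 (funext ht)).trans (hπ _).symm

/-- **Rousseau's Theorem on Sheffer functions.**  Let `A` be a finite set with
`|A| ≥ 2`.  An operation `f` on `A` is a Sheffer function (the singleton `{f}` is
complete) if and only if `f` preserves no relation of the following kinds: the graph of
a fixed-point-free permutation of `A` all of whose cycles have the same prime length;
a nontrivial equivalence relation on `A`; a nontrivial unary relation on `A`
(a nonempty proper subset of `A`). -/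
theorem rousseau_sheffer {A : Type u} [Fintype A] (hA : 2 ≤ Fintype.card A) (f : Ops A) :
    cloneGen {f} = Set.univ ↔
      ((∀ π : Equiv.Perm A, (∀ a, π a ≠ a) → (∃ p : ℕ, p.Prime ∧ ∀ a, (π ^ p) a = a) →
          ¬ Preserves f.2 {x : Fin 2 → A | x 1 = π (x 0)}) ∧
      (∀ r : A → A → Prop, Equivalence r → r ≠ Eq → (∃ a b, ¬ r a b) →
          ¬ Preserves f.2 {x : Fin 2 → A | r (x 0) (x 1)}) ∧
      (∀ B : Set A, B.Nonempty → B ≠ Set.univ →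
          ¬ Preserves f.2 {x : Fin 1 → A | x 0 ∈ B})) := by
  have : Nontrivial A := Fintype.one_lt_card_iff_nontrivial.1 hA
  obtain ⟨a⟩ : Nonempty A := inferInstance
  refine ⟨fun hf => ⟨fun π hπ _ => not_preserves_graph hf (hπ a), fun r hr hne ⟨c, d, hcd⟩ =>
    not_preserves_equivalence hf hr hne hcd, fun B hB hne => not_preserves_unary hf hB hne⟩, ?_⟩
  rintro ⟨haut, hcon, hsub⟩
  exact (rigid_of_not_preserves haut hcon hsub).cloneGen_eq_univ
end

section
/- Waldhauser's Theorem on small minimal majority clones. There exist no minimal majority clones containing exactly 2 majority operations and none containing exactly 4 majority operations; that is, if C is a minimal clone on a set A generated by a majority operation, then the number of majority operations belonging to C is neither 2 nor 4. -/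
universe u

/-- A majority operation: a ternary operation satisfying
`m(x,x,y) = m(x,y,x) = m(y,x,x) = x`. -/
def IsMajority {A : Type u} (f : (Fin 3 → A) → A) : Prop :=
  ∀ x y : A, f ![x, x, y] = x ∧ f ![x, y, x] = x ∧ f ![y, x, x] = x

/-- The set of majority operations belonging to a clone `C`. -/
def majorityOpsIn {A : Type u} (C : Set (Ops A)) : Set ((Fin 3 → A) → A) :=
  {g | IsMajority g ∧ (⟨2, g⟩ : Ops A) ∈ C}

/-!
Only the ternary part of the clone matters.  By minimality, each of its majority operations
generates it, so a set of ternary operations that contains the projections and is closed under a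
single majority operation of the clone contains the whole ternary part.

Cyclic permutation of the variables acts on the majority operations.  If it fixes all of them and
one is totally symmetric, the totally symmetric ones form a finite semigroup under composition in
the first variable; an idempotent of it is the only majority operation.  If it fixes all of them
and none is totally symmetric, write `f'(x, y, z) = f(y, x, z) ≠ f(x, y, z)`.  Then
`g = f(x, f, f')` gives a second pair `g, g'` besides `f, f'`, and `f(x, g, g')` is none of these
four, as otherwise `g(x, g, g')`, which equals `f(x, k, k')` for `k = f(x, g, g')`, would not
differ from both `g` and `g'`.

If it moves some operation, there are at least three, and if there are exactly four, they are a
totally symmetric `s`, the operation `q = s(s(x, y, z), y, z)` and its two rotations.  Each of a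
few terms in `s` and `q` is then one of these four operations.  All combinations but one force
`q` to be cyclic; the remaining one makes `x, y, z, q` and the rotations of `q` closed under `q`,
so that `q` does not generate `s`.
-/

/-- Ternary operations in curried form; `TernaryOp.uncurry` relates them to the operations
`(Fin 3 → A) → A` that clones consist of. -/
abbrev TernaryOp (A : Type u) : Type u := A → A → A → A

namespace TernaryOp

variable {A : Type u}

/-- The projection to the first variable. -/
def proj₁ : TernaryOp A := fun x _ _ => x

/-- The projection to the second variable. -/
def proj₂ : TernaryOp A := fun _ y _ => y

/-- The projection to the third variable. -/
def proj₃ : TernaryOp A := fun _ _ z => z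

/-- The ternary projections. -/
def projections : Set (TernaryOp A) := {proj₁, proj₂, proj₃}

/-- Composition `h(u, v, w)` of ternary operations. -/
def comp (h u v w : TernaryOp A) : TernaryOp A := fun x y z => h (u x y z) (v x y z) (w x y z)

/-- Cyclic permutation of the variables. -/
def rot (h : TernaryOp A) : TernaryOp A := fun x y z => h y z x

/-- Exchange of the first two variables. -/
def swap (h : TernaryOp A) : TernaryOp A := fun x y z => h y x z

/-- Invariance under cyclic permutations of the variables. -/
def Cyclic (h : TernaryOp A) : Prop := ∀ x y z, h y z x = h x y z

/-- Majority operations in curried form, see `isMajority_uncurry`. -/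
structure Majority (m : TernaryOp A) : Prop where
  fst : ∀ x y, m x x y = x
  snd : ∀ x y, m x y x = x
  thd : ∀ x y, m y x x = x

/-- Majority operations invariant under all permutations of the variables. -/
structure SymmetricMajority (s : TernaryOp A) : Prop extends Majority s where
  left_comm : ∀ x y z, s y x z = s x y z
  right_comm : ∀ x y z, s x z y = s x y z

/-- Closure of a set of ternary operations under composition with outer operation `h`. -/
def Stabilizes (h : TernaryOp A) (S : Set (TernaryOp A)) : Prop :=
  ∀ u ∈ S, ∀ v ∈ S, ∀ w ∈ S, comp h u v w ∈ S

/-- The images of `h` under cyclic permutations of the variables. -/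
def rots (h : TernaryOp A) : Set (TernaryOp A) := {h, h.rot, h.rot.rot}

theorem cyclic_iff_rot_eq {h : TernaryOp A} : h.Cyclic ↔ h.rot = h :=
  ⟨fun hh => funext₃ hh, congr_fun₃⟩

theorem Cyclic.of_rot {h : TernaryOp A} (hh : h.rot.Cyclic) : h.Cyclic :=
  fun x y z => hh z x y

theorem finite_rots (h : TernaryOp A) : h.rots.Finite :=
  (Set.toFinite {h.rot, h.rot.rot}).insert h

theorem ncard_rots {h : TernaryOp A} (hh : ¬h.Cyclic) : h.rots.ncard = 3 := by
  rw [cyclic_iff_rot_eq] at hh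
  exact Set.ncard_eq_three.2 ⟨_, _, _, fun e => hh e.symm,
    fun e => hh (congrArg rot e), fun e => hh (congrArg (rot ∘ rot) e).symm, rfl⟩

theorem not_cyclic_of_mem_rots {h u : TernaryOp A} (hh : ¬h.Cyclic) (hu : u ∈ h.rots) :
    ¬u.Cyclic := by
  rcases hu with rfl | rfl | rfl
  exacts [hh, fun h => hh h.of_rot, fun h => hh h.of_rot.of_rot]

theorem mem_rots_of_rot_mem {h u : TernaryOp A} (hu : u.rot ∈ h.rots) : u ∈ h.rots := by
  rcases hu with hu | hu | hu
  exacts [.inr (.inr (congrArg (rot ∘ rot) hu)), .inl (congrArg (rot ∘ rot) hu),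
    .inr (.inl (congrArg (rot ∘ rot) hu))]

theorem Cyclic.swap {h : TernaryOp A} (hh : h.Cyclic) : h.swap.Cyclic :=
  fun x y z => (hh x z y).trans (hh y x z)

theorem Cyclic.symmetricMajority {h : TernaryOp A} (hh : h.Cyclic) (hm : h.Majority)
    (hswap : h.swap = h) : h.SymmetricMajority where
  toMajority := hm
  left_comm := congr_fun₃ hswap
  right_comm x y z := (hh y x z).trans (congr_fun₃ hswap x y z)

namespace Majority

variable {h u v w : TernaryOp A}

theorem rot (hh : h.Majority) : h.rot.Majority :=
  ⟨hh.snd, hh.thd, hh.fst⟩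

theorem swap (hh : h.Majority) : h.swap.Majority :=
  ⟨hh.fst, hh.thd, hh.snd⟩

theorem comp (hh : h.Majority) (hu : u.Majority) (hv : v.Majority) (hw : w.Majority) :
    (comp h u v w).Majority := by
  constructor <;> intro x y <;>
    simp only [TernaryOp.comp, hu.fst, hu.snd, hu.thd, hv.fst, hv.snd, hv.thd, hw.fst, hw.snd,
      hw.thd, hh.fst]

theorem comp_proj₁ (hh : h.Majority) (hv : v.Majority) (hw : w.Majority) :
    (TernaryOp.comp h proj₁ v w).Majority := by
  constructor <;> intro x y <;>
    simp only [TernaryOp.comp, proj₁, hv.fst, hv.snd, hv.thd, hw.fst, hw.snd, hw.thd, hh.fst,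
      hh.thd]

theorem comp_proj₁_proj₂ (hh : h.Majority) (hw : w.Majority) :
    (TernaryOp.comp h proj₁ proj₂ w).Majority := by
  constructor <;> intro x y <;>
    simp only [TernaryOp.comp, proj₁, proj₂, hw.fst, hw.snd, hw.thd, hh.fst, hh.snd, hh.thd]

theorem comp_proj₂_proj₃ (hh : h.Majority) (hu : u.Majority) :
    (TernaryOp.comp h u proj₂ proj₃).Majority := by
  constructor <;> intro x y <;>
    simp only [TernaryOp.comp, proj₂, proj₃, hu.fst, hu.snd, hu.thd, hh.fst, hh.snd]

theorem notMem_projections [Nontrivial A] (hh : h.Majority) : h ∉ projections := by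
  obtain ⟨x, y, hxy⟩ := exists_pair_ne A
  rintro (rfl | rfl | rfl)
  exacts [hxy (hh.thd x y).symm, hxy (hh.snd x y).symm, hxy (hh.fst x y).symm]

theorem comp_self_fst (hh : h.Majority) (u v : TernaryOp A) : TernaryOp.comp h u u v = u :=
  funext₃ fun _ _ _ => hh.fst _ _

theorem comp_self_thd (hh : h.Majority) (u v : TernaryOp A) : TernaryOp.comp h v u u = u :=
  funext₃ fun _ _ _ => hh.thd _ _

end Majority

/-! ### Terms over a totally symmetric majority operation -/

/-- The term `q = s(s(x, y, z), y, z)`. -/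
def square (s : TernaryOp A) : TernaryOp A := fun x y z => s (s x y z) y z

/-- The term `s(q(x, y, z), y, z)`, where `q = s.square`. -/
def cube (s : TernaryOp A) : TernaryOp A := comp s s.square proj₂ proj₃

/-- The term `s(x, y, q(x, y, z))`, where `q = s.square`.  For symmetric `s` it differs from
`s.cube` in that `q` replaces a variable other than its distinguished first one. -/
def crossCube (s : TernaryOp A) : TernaryOp A := comp s proj₁ proj₂ s.square

/-- The term `s(x, s(x, y, z), q(y, z, x))`, where `q = s.square`. -/
def mix (s : TernaryOp A) : TernaryOp A := comp s proj₁ s s.square.rot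

/-- The term `s` applied to the three rotations of `q = s.square`. -/
def squareOrbit (s : TernaryOp A) : TernaryOp A :=
  comp s s.square s.square.rot s.square.rot.rot

/-- The term `q(x, q(y, z, x), q(z, x, y))`, where `q = s.square`. -/
def pointedOrbit (s : TernaryOp A) : TernaryOp A :=
  comp s.square proj₁ s.square.rot s.square.rot.rot

theorem Majority.square {s : TernaryOp A} (hs : s.Majority) : s.square.Majority :=
  hs.comp_proj₂_proj₃ hs

theorem square_square_of_cube_eq {s : TernaryOp A} (hcube : s.cube = s) (x y z : A) :
    s.square (s.square x y z) y z = s.square x y z := by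
  have cube : s (s.square x y z) y z = s x y z := congr_fun₃ hcube x y z
  rw [square, cube, square]

namespace SymmetricMajority

variable {s : TernaryOp A}

theorem cyclic (hs : s.SymmetricMajority) : s.Cyclic := fun x y z => by
  rw [hs.right_comm, hs.left_comm]

theorem square_right_comm (hs : s.SymmetricMajority) (x y z : A) :
    s.square x z y = s.square x y z := by
  simp only [square, hs.right_comm]

theorem cyclic_square_of_eq (hs : s.SymmetricMajority) (h : s.square = s) : s.square.Cyclic :=
  h.symm ▸ hs.cyclic

theorem cyclic_square_of_mix_eq_self (hs : s.SymmetricMajority) (hmix : s.mix = s) :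
    s.square.Cyclic := by
  have square_snd (x y z : A) : s.square z (s x y z) y = s x y z := by
    have mix : s y (s y x z) (s.square x z y) = s y x z := congr_fun₃ hmix y x z
    grind [hs.left_comm, hs.right_comm, square]
  refine hs.cyclic_square_of_eq (funext₃ fun y x z => ?_)
  grind [hs.left_comm, hs.right_comm, square]

theorem cyclic_square_of_mix_eq_square (hs : s.SymmetricMajority) (hmix : s.mix = s.square) :
    s.square.Cyclic := by
  have square_snd (x y z : A) : s.square z (s x y z) y = s.square y z x := by
    have mix : s y (s y x z) (s.square x z y) = s.square y x z := congr_fun₃ hmix y x z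
    grind [hs.left_comm, hs.right_comm, square]
  have square_snd_square (x y z : A) : s.square y (s.square y x z) (s x y z) = s.square x y z := by
    grind [hs.left_comm, hs.right_comm, square]
  intro x y z
  grind [hs.left_comm, hs.right_comm, hs.square_right_comm]

theorem cyclic_square_of_cube_eq_self_of_cross_eq_self (hs : s.SymmetricMajority)
    (hcube : s.cube = s) (hcross : s.crossCube = s) : s.square.Cyclic := by
  refine hs.cyclic_square_of_eq (funext₃ fun x y z => ?_)
  have cube : s (s.square x y z) y z = s x y z := congr_fun₃ hcube x y z
  have cross : s (s.square x y z) y (s.square (s.square x y z) y z) = s (s.square x y z) y z :=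
    congr_fun₃ hcross (s.square x y z) y z
  rw [square_square_of_cube_eq hcube, hs.snd, cube] at cross
  exact cross

theorem cyclic_square_of_cube_eq_self_of_cross_eq_rot (hs : s.SymmetricMajority)
    (hcube : s.cube = s) (hcross : s.crossCube = s.square.rot) : s.square.Cyclic := by
  have square_thd (x y z : A) : s.square y z (s.square x y z) = s.square x y z := by
    have cross : s (s.square x y z) y (s.square (s.square x y z) y z) =
        s.square y z (s.square x y z) :=
      congr_fun₃ hcross (s.square x y z) y z
    rw [← cross, square_square_of_cube_eq hcube, hs.snd]
  refine hs.cyclic_square_of_eq (funext₃ fun x y z => ?_)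
  have cross : s y z (s.square y z (s.square x y z)) = s.square z (s.square x y z) y :=
    congr_fun₃ hcross y z (s.square x y z)
  have cube : s (s.square x y z) y z = s x y z := congr_fun₃ hcube x y z
  grind [hs.left_comm, hs.right_comm, hs.square_right_comm]

theorem cyclic_square_of_cube_eq_self_of_cross_eq_rot_rot (hs : s.SymmetricMajority)
    (hcube : s.cube = s) (hcross : s.crossCube = s.square.rot.rot) : s.square.Cyclic := by
  have square_fst (x y z : A) : s.square (s.square x y z) x y = s x y z := by
    have cross : s x y (s.square x y z) = s.square z x y := congr_fun₃ hcross x y z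
    have cube : s (s.square z x y) x y = s z x y := congr_fun₃ hcube z x y
    grind [hs.left_comm, hs.right_comm, square]
  have square_fst_rot (x y z : A) : s.square (s x y z) (s.square z x y) z = s.square y z x := by
    have cross : s z x (s.square z x y) = s.square y z x := congr_fun₃ hcross z x y
    grind [hs.left_comm, hs.right_comm, hs.square_right_comm]
  intro x y z
  grind [hs.left_comm, hs.right_comm, hs.square_right_comm]

theorem cyclic_square_of_cube_eq_self_of_mix_eq_rot (hs : s.SymmetricMajority)
    (hcube : s.cube = s) (hmix : s.mix = s.square.rot) : s.square.Cyclic := by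
  have square_snd (x y z : A) : s.square z (s.square x y z) y = s.square x y z := by
    have cube : s (s.square x y z) y z = s x y z := congr_fun₃ hcube x y z
    have mix : s y (s y x z) (s.square x z y) = s.square x z y := congr_fun₃ hmix y x z
    grind [hs.left_comm, hs.right_comm, square]
  refine hs.cyclic_square_of_eq (funext₃ fun x y z => ?_)
  have cube : s (s.square x y z) y z = s x y z := congr_fun₃ hcube x y z
  have cube' : s (s.square z (s.square x y z) y) (s.square x y z) y = s z (s.square x y z) y :=
    congr_fun₃ hcube z (s.square x y z) y
  rw [square_snd, hs.fst] at cube'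
  grind [hs.left_comm, hs.right_comm]

theorem cyclic_square_of_cube_eq_square_of_mix_eq_rot_rot (hs : s.SymmetricMajority)
    (hcube : s.cube = s.square) (hmix : s.mix = s.square.rot.rot) : s.square.Cyclic := by
  have square_snd (x y z : A) : s.square x (s x y z) y = s.square x y z := by
    have mix : s y (s y z x) (s.square z x y) = s.square x y z := congr_fun₃ hmix y z x
    grind [hs.left_comm, hs.right_comm, square]
  intro x y z
  have mix : s z (s z x y) (s.square x y z) = s.square y z x := congr_fun₃ hmix z x y
  have cube : s (s.square x z (s x y z)) z (s x y z) = s.square x z (s x y z) :=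
    congr_fun₃ hcube x z (s x y z)
  grind [hs.left_comm, hs.right_comm, hs.square_right_comm]

theorem cyclic_square_of_cube_eq_square_of_pointed_eq_square (hs : s.SymmetricMajority)
    (hcube : s.cube = s.square) (horbit : s.squareOrbit = s)
    (hpointed : s.pointedOrbit = s.square) : s.square.Cyclic := by
  refine hs.cyclic_square_of_eq (funext₃ fun x y z => ?_)
  have orbit : s (s.square x y z) (s.square y z x) (s.square z x y) = s x y z :=
    congr_fun₃ horbit x y z
  have pointed : s.square x (s.square y z x) (s.square z x y) = s.square x y z :=
    congr_fun₃ hpointed x y z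
  have cube : s (s.square x (s.square y z x) (s.square z x y)) (s.square y z x) (s.square z x y) =
      s.square x (s.square y z x) (s.square z x y) := congr_fun₃ hcube _ _ _
  rw [pointed, orbit] at cube
  exact cube.symm

theorem cyclic_square_of_mix_eq_rot_of_cross_eq_square (hs : s.SymmetricMajority)
    (hmix : s.mix = s.square.rot) (hcross : s.crossCube = s.square)
    (hpointed : s.pointedOrbit = s) : s.square.Cyclic := by
  refine hs.cyclic_square_of_eq (funext₃ fun y z x => ?_)
  have mix : s x (s x y z) (s.square y z x) = s.square y z x := congr_fun₃ hmix x y z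
  have pointed : s.square x (s.square y z x) (s.square z x y) = s x y z := congr_fun₃ hpointed x y z
  have cross : s x (s.square y z x) (s.square x (s.square y z x) (s.square z x y)) =
      s.square x (s.square y z x) (s.square z x y) :=
    congr_fun₃ hcross x (s.square y z x) (s.square z x y)
  grind [hs.left_comm, hs.right_comm]

theorem cyclic_square_of_mix_eq_rot_of_cross_eq_self (hs : s.SymmetricMajority)
    (hmix : s.mix = s.square.rot) (hcross : s.crossCube = s) : s.square.Cyclic := by
  have square_thd (x y z : A) : s.square x y (s.square x y z) = s.square x y z := by
    have cross : s x y (s.square x y z) = s x y z := congr_fun₃ hcross x y z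
    have mix : s y (s y x z) (s.square x z y) = s.square x z y := congr_fun₃ hmix y x z
    grind [hs.left_comm, hs.right_comm, hs.square_right_comm, square]
  refine hs.cyclic_square_of_eq (funext₃ fun x y z => ?_)
  have cross : s x y (s.square x y z) = s x y z := congr_fun₃ hcross x y z
  have cross' : s x (s.square x y z) (s.square x (s.square x y z) y) = s x (s.square x y z) y :=
    congr_fun₃ hcross x (s.square x y z) y
  grind [hs.left_comm, hs.right_comm, hs.square_right_comm, hs.thd]

theorem cyclic_square_of_cube_eq_square_of_cross_eq_rot (hs : s.SymmetricMajority)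
    (hcube : s.cube = s.square) (hcross : s.crossCube = s.square.rot) : s.square.Cyclic := by
  have square_fst (x y z : A) : s.square (s.square x y z) x y = s.square x y z := by
    have cross : s x y (s.square x y z) = s.square y z x := congr_fun₃ hcross x y z
    have cross' : s y x (s.square y x z) = s.square x z y := congr_fun₃ hcross y x z
    grind [hs.left_comm, hs.right_comm, square]
  intro x y z
  have cross : s x y (s.square x y z) = s.square y z x := congr_fun₃ hcross x y z
  have cube : s (s.square (s.square x y z) x y) x y = s.square (s.square x y z) x y :=
    congr_fun₃ hcube (s.square x y z) x y
  grind [hs.left_comm, hs.right_comm, hs.square_right_comm]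

theorem cyclic_square_of_mix_eq_rot_of_cross_eq_rot_rot (hs : s.SymmetricMajority)
    (hmix : s.mix = s.square.rot) (hcross : s.crossCube = s.square.rot.rot)
    (hpointed : s.pointedOrbit = s) : s.square.Cyclic := by
  have square_rot_fst (x y z : A) :
      s.square (s.square z x y) x (s.square y z x) = s.square y z x := by
    have mix : s x (s x y z) (s.square y z x) = s.square y z x := congr_fun₃ hmix x y z
    have pointed : s.square x (s.square y z x) (s.square z x y) = s x y z :=
      congr_fun₃ hpointed x y z
    have cross : s x (s.square y z x) (s.square x (s.square y z x) (s.square z x y)) =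
      s.square (s.square z x y) x (s.square y z x) :=
      congr_fun₃ hcross x (s.square y z x) (s.square z x y)
    grind [hs.left_comm, hs.right_comm]
  have apply_rot_fst (x y z : A) : s (s.square y z x) x (s.square z x y) = s.square y z x := by
    have cross : s (s.square y z x) x (s.square (s.square y z x) x (s.square z x y)) =
      s.square (s.square z x y) (s.square y z x) x :=
      congr_fun₃ hcross (s.square y z x) x (s.square z x y)
    grind [hs.left_comm, hs.right_comm, hs.square_right_comm]
  intro x y z
  grind [hs.left_comm, hs.right_comm, hs.square_right_comm]

theorem cube_right_comm (hs : s.SymmetricMajority) (x y z : A) : s.cube x z y = s.cube x y z := by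
  simp only [cube, comp, proj₂, proj₃, hs.square_right_comm, hs.right_comm]

theorem pointedOrbit_right_comm (hs : s.SymmetricMajority) (x y z : A) :
    s.pointedOrbit x z y = s.pointedOrbit x y z := by
  simp only [pointedOrbit, comp, proj₁, TernaryOp.rot]
  rw [hs.square_right_comm, hs.square_right_comm y x z, hs.square_right_comm z y x]

theorem squareOrbit_cyclic (hs : s.SymmetricMajority) : s.squareOrbit.Cyclic := fun _ _ _ =>
  hs.cyclic _ _ _

theorem eq_or_eq_square_of_right_comm {h : TernaryOp A} (hs : s.SymmetricMajority)
    (hq : ¬s.square.Cyclic)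
    (hmem : h ∈ insert s s.square.rots)
    (hright : ∀ x y z, h x z y = h x y z) : h = s ∨ h = s.square := by
  rcases hmem with rfl | rfl | rfl | rfl
  · exact .inl rfl
  · exact .inr rfl
  · refine absurd (fun x y z => ?_) hq
    rw [hs.square_right_comm y x z]
    exact hright z x y
  · refine absurd (fun x y z => ?_) hq
    rw [hs.square_right_comm x z y]
    exact (hright z x y).symm

theorem cube_mix_crossCube_eq (hs : s.SymmetricMajority) (hq : ¬s.square.Cyclic)
    (hmix : s.mix ∈ insert s s.square.rots)
    (hcross : s.crossCube ∈ insert s s.square.rots)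
    (hcube : s.cube = s ∨ s.cube = s.square) (horbit : s.squareOrbit = s)
    (hpointed : s.pointedOrbit = s ∨ s.pointedOrbit = s.square) :
    s.cube = s ∧ s.mix = s.square.rot.rot ∧ s.crossCube = s.square := by
  rcases hmix with mix | mix | mix | mix
  · exact absurd (hs.cyclic_square_of_mix_eq_self mix) hq
  · exact absurd (hs.cyclic_square_of_mix_eq_square mix) hq
  · exfalso
    refine hq ?_
    rcases hcube with cube | cube
    · exact hs.cyclic_square_of_cube_eq_self_of_mix_eq_rot cube mix
    rcases hpointed with pointed | pointed
    · rcases hcross with cross | cross | cross | cross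
      · exact hs.cyclic_square_of_mix_eq_rot_of_cross_eq_self mix cross
      · exact hs.cyclic_square_of_mix_eq_rot_of_cross_eq_square mix cross pointed
      · exact hs.cyclic_square_of_cube_eq_square_of_cross_eq_rot cube cross
      · exact hs.cyclic_square_of_mix_eq_rot_of_cross_eq_rot_rot mix cross pointed
    · exact hs.cyclic_square_of_cube_eq_square_of_pointed_eq_square cube horbit pointed
  · rcases hcube with cube | cube
    · rcases hcross with cross | cross | cross | cross
      · exact absurd (hs.cyclic_square_of_cube_eq_self_of_cross_eq_self cube cross) hq
      · exact ⟨cube, mix, cross⟩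
      · exact absurd (hs.cyclic_square_of_cube_eq_self_of_cross_eq_rot cube cross) hq
      · exact absurd (hs.cyclic_square_of_cube_eq_self_of_cross_eq_rot_rot cube cross) hq
    · exact absurd (hs.cyclic_square_of_cube_eq_square_of_mix_eq_rot_rot cube mix) hq

end SymmetricMajority

/-! ### Absorbing operations -/

/-- Identities under which the projections and the rotations of `h` are closed under `h`, see
`Absorbing.stabilizes`. -/
structure Absorbing (h : TernaryOp A) : Prop extends Majority h where
  right_comm : ∀ x y z, h x z y = h x y z
  fst_snd_apply : ∀ x y z, h x y (h x y z) = h x y z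
  snd_fst_apply : ∀ x y z, h y x (h x y z) = h x y z
  apply_fst_snd : ∀ x y z, h (h x y z) x y = h x y z
  apply_snd_thd : ∀ x y z, h (h x y z) y z = h x y z
  fst_snd_rot : ∀ x y z, h x y (h z x y) = h x y z

theorem SymmetricMajority.absorbing_square {s : TernaryOp A} (hs : s.SymmetricMajority)
    (hcube : s.cube = s) (hmix : s.mix = s.square.rot.rot) (hcross : s.crossCube = s.square) :
    s.square.Absorbing where
  toMajority := hs.toMajority.square
  right_comm := hs.square_right_comm
  fst_snd_apply x y z := by
    have cross : s x y (s.square x y z) = s.square x y z := congr_fun₃ hcross x y z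
    rw [square, hs.right_comm, cross, hs.fst]
  snd_fst_apply x y z := by
    have cross : s x y (s.square x y z) = s.square x y z := congr_fun₃ hcross x y z
    grind [hs.left_comm, hs.right_comm, hs.thd, square]
  apply_fst_snd x y z := by
    have cross : s x y (s.square x y z) = s.square x y z := congr_fun₃ hcross x y z
    grind [hs.left_comm, hs.right_comm, square]
  apply_snd_thd := square_square_of_cube_eq hcube
  fst_snd_rot x y z := by
    have mix : s y (s y z x) (s.square z x y) = s.square x y z := congr_fun₃ hmix y z x
    have cube : s (s.square z x y) x y = s z x y := congr_fun₃ hcube z x y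
    grind [hs.left_comm, hs.right_comm, square]

/-- The projections together with the rotations of `h`. -/
def orbit (h : TernaryOp A) : Set (TernaryOp A) := projections ∪ h.rots

theorem rot_mem_orbit {h u : TernaryOp A} (hu : u ∈ h.orbit) : u.rot ∈ h.orbit := by
  rcases hu with (rfl | rfl | rfl) | (rfl | rfl | rfl)
  exacts [.inl (.inr (.inl rfl)), .inl (.inr (.inr rfl)), .inl (.inl rfl),
    .inr (.inr (.inl rfl)), .inr (.inr (.inr rfl)), .inr (.inl rfl)]

namespace Absorbing

variable {h u v w : TernaryOp A}

theorem apply_snd_rot (H : h.Absorbing) (x y z : A) : h (h x y z) y (h z x y) = h x y z := by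
  have := H.fst_snd_rot x y z
  have := H.apply_snd_thd x y (h z x y)
  grind [H.right_comm]

theorem fst_rot_rot (H : h.Absorbing) (x y z : A) : h x (h y z x) (h z x y) = h x y z := by
  have := H.fst_snd_rot x y z
  have := H.fst_snd_rot y x z
  have := H.fst_snd_rot x (h z x y) y
  grind [H.right_comm]

theorem apply_rot_rot (H : h.Absorbing) (x y z : A) :
    h (h x y z) (h y z x) (h z x y) = h x y z := by
  rw [← H.fst_rot_rot x y z, H.apply_snd_thd]

theorem fst_rot_apply (H : h.Absorbing) (x y z : A) : h x (h y z x) (h x y z) = h x y z := by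
  have := H.fst_snd_rot x z y
  have := H.fst_snd_apply x (h y z x) z
  grind [H.right_comm]

theorem rot_fst_apply (H : h.Absorbing) (x y z : A) : h (h y z x) x (h x y z) = h x y z := by
  have := H.fst_snd_rot x z y
  have := H.snd_fst_apply x (h y z x) z
  grind [H.right_comm]

theorem apply_fst_rot (H : h.Absorbing) (x y z : A) : h (h x y z) x (h y z x) = h x y z := by
  have := H.fst_snd_rot x z y
  have := H.apply_fst_snd x (h y z x) z
  grind [H.right_comm]

theorem comp_right_comm (H : h.Absorbing) (u v w : TernaryOp A) : comp h u w v = comp h u v w :=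
  funext₃ fun _ _ _ => H.right_comm _ _ _

theorem comp_eq_self (H : h.Absorbing) (hu : u = proj₁ ∨ u = h) (hv : v = proj₂ ∨ v = h.rot)
    (hw : w = proj₃ ∨ w = h.rot.rot) : comp h u v w = h := by
  funext x y z
  rcases hu with rfl | rfl <;> rcases hv with rfl | rfl <;> rcases hw with rfl | rfl <;>
    simp only [comp, rot, proj₁, proj₂, proj₃] <;>
    grind [H.right_comm, H.fst_snd_rot, H.apply_snd_thd, H.apply_snd_rot, H.fst_rot_rot,
      H.apply_rot_rot]

theorem comp_proj₁_self (H : h.Absorbing)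
    (hv : v = proj₂ ∨ v = proj₃ ∨ v = h.rot ∨ v = h.rot.rot) : comp h proj₁ v h = h := by
  funext x y z
  rcases hv with rfl | rfl | rfl | rfl <;> simp only [comp, rot, proj₁, proj₂, proj₃] <;>
    grind [H.right_comm, H.fst_snd_apply, H.fst_rot_apply]

theorem comp_self_proj₁ (H : h.Absorbing)
    (hv : v = proj₂ ∨ v = proj₃ ∨ v = h.rot ∨ v = h.rot.rot) : comp h h proj₁ v = h := by
  funext x y z
  rcases hv with rfl | rfl | rfl | rfl <;> simp only [comp, rot, proj₁, proj₂, proj₃] <;>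
    grind [H.right_comm, H.apply_fst_snd, H.apply_fst_rot]

theorem comp_of_proj₁_of_self (H : h.Absorbing)
    (hv : v = proj₂ ∨ v = proj₃ ∨ v = h.rot ∨ v = h.rot.rot) : comp h v proj₁ h = h := by
  funext x y z
  rcases hv with rfl | rfl | rfl | rfl <;> simp only [comp, rot, proj₁, proj₂, proj₃] <;>
    grind [H.right_comm, H.snd_fst_apply, H.rot_fst_apply]

theorem comp_mem_orbit (H : h.Absorbing) (hu : u = proj₁ ∨ u = h) (hv : v ∈ h.orbit)
    (hw : w ∈ h.orbit) : comp h u v w ∈ h.orbit := by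
  have comp_proj₂_rot : comp h u proj₂ h.rot = h.rot := by
    rcases hu with hu | hu <;> rw [hu]
    · exact congrArg rot (H.comp_of_proj₁_of_self (v := proj₃) (by simp))
    · exact congrArg rot (H.comp_of_proj₁_of_self (v := h.rot.rot) (by simp))
  have comp_proj₃_rot_rot : comp h u proj₃ h.rot.rot = h.rot.rot := by
    rcases hu with hu | hu <;> rw [hu]
    · exact congrArg (rot ∘ rot) (H.comp_of_proj₁_of_self (v := proj₂) (by simp))
    · exact congrArg (rot ∘ rot) (H.comp_of_proj₁_of_self (v := h.rot) (by simp))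
  rcases hv with (rfl | rfl | rfl) | (rfl | rfl | rfl) <;>
    rcases hw with (rfl | rfl | rfl) | (rfl | rfl | rfl) <;>
    simp only [orbit, rots, projections, Set.mem_union, Set.mem_insert_iff,
      Set.mem_singleton_iff] <;>
    grind [H.comp_right_comm, H.comp_self_fst, H.comp_self_thd, H.comp_eq_self, H.comp_proj₁_self,
      H.comp_self_proj₁]

theorem stabilizes (H : h.Absorbing) : h.Stabilizes h.orbit := by
  intro u hu v hv w hw
  have of_rot {u v w : TernaryOp A} (hmem : comp h u.rot v.rot w.rot ∈ h.orbit) :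
      comp h u v w ∈ h.orbit := rot_mem_orbit (rot_mem_orbit hmem)
  have hv' := rot_mem_orbit hv
  have hw' := rot_mem_orbit hw
  rcases hu with (rfl | rfl | rfl) | (rfl | rfl | rfl)
  · exact H.comp_mem_orbit (.inl rfl) hv hw
  · exact of_rot (of_rot (H.comp_mem_orbit (.inl rfl) (rot_mem_orbit hv') (rot_mem_orbit hw')))
  · exact of_rot (H.comp_mem_orbit (.inl rfl) hv' hw')
  · exact H.comp_mem_orbit (.inr rfl) hv hw
  · exact of_rot (of_rot (H.comp_mem_orbit (.inr rfl) (rot_mem_orbit hv') (rot_mem_orbit hw')))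
  · exact of_rot (H.comp_mem_orbit (.inr rfl) hv' hw')

end Absorbing

/-! ### Totally symmetric idempotents -/

namespace SymmetricMajority

variable {s t : TernaryOp A}

theorem comp_left_comm (hs : s.SymmetricMajority) (u v w : TernaryOp A) :
    comp s v u w = comp s u v w :=
  funext₃ fun _ _ _ => hs.left_comm _ _ _

theorem comp_right_comm (hs : s.SymmetricMajority) (u v w : TernaryOp A) :
    comp s u w v = comp s u v w :=
  funext₃ fun _ _ _ => hs.right_comm _ _ _

theorem stabilizes_of_square_eq (hs : s.SymmetricMajority) (hidem : s.square = s) :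
    s.Stabilizes (projections ∪ {s}) := by
  have comp₁₂ : comp s s proj₁ proj₂ = s := by
    funext x y z
    change s (s x y z) x y = s x y z
    rw [← hs.cyclic x y z, ← hs.cyclic y z x]
    exact congr_fun₃ hidem z x y
  have comp₁₃ : comp s s proj₁ proj₃ = s := by
    funext x y z
    change s (s x y z) x z = s x y z
    rw [← hs.left_comm x y z]
    exact congr_fun₃ hidem y x z
  have comp₂₃ : comp s s proj₂ proj₃ = s := hidem
  have comp_proj : comp s proj₁ proj₂ proj₃ = s := rfl
  rintro u ((rfl | rfl | rfl) | rfl) v ((rfl | rfl | rfl) | rfl) w ((rfl | rfl | rfl) | rfl) <;>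
    simp only [projections, Set.mem_union, Set.mem_insert_iff, Set.mem_singleton_iff] <;>
    grind [hs.comp_left_comm, hs.comp_right_comm, hs.comp_self_fst]

theorem comp_proj₂_proj₃ (hs : s.SymmetricMajority) (ht : t.SymmetricMajority)
    (hcyclic : (comp s t proj₂ proj₃).Cyclic) : (comp s t proj₂ proj₃).SymmetricMajority := by
  have right_comm (x y z : A) : comp s t proj₂ proj₃ x z y = comp s t proj₂ proj₃ x y z := by
    simp only [comp, proj₂, proj₃, ht.right_comm, hs.right_comm]
  exact hcyclic.symmetricMajority (hs.toMajority.comp_proj₂_proj₃ ht.toMajority) <|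
    funext₃ fun x y z => (hcyclic y x z).symm.trans (right_comm x y z)

end SymmetricMajority

/-! ### Cyclic operations without symmetry -/

/-- The term `f(x, u, u')`, where `u'` is `u` with two variables exchanged. -/
def twist (f u : TernaryOp A) : TernaryOp A := comp f proj₁ u u.swap

theorem Majority.twist {f u : TernaryOp A} (hf : f.Majority) (hu : u.Majority) :
    (f.twist u).Majority :=
  hf.comp_proj₁ hu hu.swap

theorem Cyclic.swap_twist {f u : TernaryOp A} (hu : u.Cyclic) (htwist : (f.twist u).Cyclic) :
    (f.twist u).swap = f.twist u.swap := by
  funext x y z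
  have swap_fst : u x z y = u y x z := hu y x z
  have swap_snd : u z x y = u x y z := (hu z x y).symm
  calc f.twist u y x z = f x (u x z y) (u z x y) := (htwist y x z).symm
    _ = f x (u y x z) (u x y z) := by rw [swap_fst, swap_snd]

theorem Cyclic.swap_eq_of_twist_eq_self {f : TernaryOp A} (hf : f.Cyclic) (hm : f.Majority)
    (htwist : f.twist f = f) : f.swap = f := by
  funext x y z
  have twist (a b c : A) : f a (f a b c) (f b a c) = f a b c := congr_fun₃ htwist a b c
  have twist_swap : f x (f y x z) (f x y z) = f y x z := by
    rw [← hf y x z, hf z x y]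
    exact twist x z y
  have apply_fst_swap : f (f x y z) x (f y x z) = f y x z := by
    rw [← hf, twist_swap]
  have twist_apply := twist (f x y z) x (f y x z)
  rw [apply_fst_swap, twist x y z, hm.snd] at twist_apply
  exact twist_apply.symm

theorem Cyclic.swap_eq_of_twist_eq_swap {f : TernaryOp A} (hf : f.Cyclic) (hm : f.Majority)
    (htwist : f.twist f = f.swap) : f.swap = f := by
  funext x y z
  have twist (a b c : A) : f a (f a b c) (f b a c) = f b a c := congr_fun₃ htwist a b c
  have twist_swap : f x (f y x z) (f x y z) = f x y z := by
    rw [← hf y x z, hf z x y]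
    exact twist x z y
  have apply_swap_fst : f (f y x z) x (f x y z) = f y x z := by
    rw [← hf, twist x y z]
  have twist_apply := twist (f y x z) x (f x y z)
  rw [apply_swap_fst, twist_swap, hm.fst] at twist_apply
  exact twist_apply

theorem twist_twist_self {f : TernaryOp A} (hf : f.Cyclic) (hg : (f.twist f).Cyclic)
    (hk : (f.twist (f.twist f)).Cyclic) :
    (f.twist f).twist (f.twist f) = f.twist (f.twist (f.twist f)) := by
  have swap_fst (x y z : A) : f (f.twist f x y z) x (f.twist f y x z) =
      (f.twist (f.twist f)).swap x y z := by
    rw [hg.swap_twist hk, ← hf]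
    rfl
  funext x y z
  exact congrArg (f x (f x (f.twist f x y z) (f.twist f y x z))) (swap_fst x y z)

theorem twist_twist_notMem {f : TernaryOp A} (hm : f.Majority) (hf : f.Cyclic)
    (hg : (f.twist f).Cyclic) (hk : (f.twist (f.twist f)).Cyclic)
    (hswap : (f.twist f).swap ≠ f.twist f) :
    f.twist (f.twist f) ∉
      ({f, f.swap, f.twist f, (f.twist f).swap} : Set (TernaryOp A)) := by
  have eq_self := hg.swap_eq_of_twist_eq_self (hm.twist hm)
  have eq_swap := hg.swap_eq_of_twist_eq_swap (hm.twist hm)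
  rw [twist_twist_self hf hg hk] at eq_self eq_swap
  rintro (h | h | h | h)
  · exact hswap (eq_self (by rw [h]))
  · exact hswap (eq_swap (by rw [h, hf.swap_twist hg]))
  · exact hswap (eq_self (by rw [h, h]))
  · exact hswap (eq_self (by rw [h, ← hg.swap_twist hk, h]; rfl))

/-! ### Ternary parts of clones -/

/-- The ternary part of a clone: a set of ternary operations that contains the projections and is
closed under composition. -/
structure IsTernaryClone (T : Set (TernaryOp A)) : Prop where
  projections_subset : projections ⊆ T
  comp_mem : ∀ h ∈ T, h.Stabilizes T

/-- The ternary part of a minimal clone, in the form in which minimality is used: every majority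
operation of `T` generates `T`. -/
structure IsMinimalTernaryClone (T : Set (TernaryOp A)) : Prop extends IsTernaryClone T where
  subset_of_stabilizes : ∀ {S : Set (TernaryOp A)} {h : TernaryOp A}, h ∈ T → h.Majority →
    projections ⊆ S → h.Stabilizes S → T ⊆ S

/-- The majority operations of a set of ternary operations. -/
def majorities (T : Set (TernaryOp A)) : Set (TernaryOp A) := {m ∈ T | m.Majority}

namespace IsTernaryClone

variable {T : Set (TernaryOp A)} {f h s u : TernaryOp A}

theorem proj₁_mem (hT : IsTernaryClone T) : proj₁ ∈ T := hT.projections_subset (.inl rfl)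

theorem proj₂_mem (hT : IsTernaryClone T) : proj₂ ∈ T := hT.projections_subset (.inr (.inl rfl))

theorem proj₃_mem (hT : IsTernaryClone T) : proj₃ ∈ T := hT.projections_subset (.inr (.inr rfl))

theorem rot_mem_majorities (hT : IsTernaryClone T) (hh : h ∈ majorities T) :
    h.rot ∈ majorities T :=
  ⟨hT.comp_mem h hh.1 _ hT.proj₂_mem _ hT.proj₃_mem _ hT.proj₁_mem, hh.2.rot⟩

theorem swap_mem_majorities (hT : IsTernaryClone T) (hh : h ∈ majorities T) :
    h.swap ∈ majorities T :=
  ⟨hT.comp_mem h hh.1 _ hT.proj₂_mem _ hT.proj₁_mem _ hT.proj₃_mem, hh.2.swap⟩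

theorem comp_proj₂_proj₃_mem_majorities (hT : IsTernaryClone T) (hh : h ∈ majorities T)
    (hu : u ∈ majorities T) : comp h u proj₂ proj₃ ∈ majorities T :=
  ⟨hT.comp_mem h hh.1 u hu.1 _ hT.proj₂_mem _ hT.proj₃_mem, hh.2.comp_proj₂_proj₃ hu.2⟩

theorem square_mem_majorities (hT : IsTernaryClone T) (hs : s ∈ majorities T) :
    s.square ∈ majorities T :=
  hT.comp_proj₂_proj₃_mem_majorities hs hs

theorem cube_mem_majorities (hT : IsTernaryClone T) (hs : s ∈ majorities T) :
    s.cube ∈ majorities T :=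
  hT.comp_proj₂_proj₃_mem_majorities hs (hT.square_mem_majorities hs)

theorem crossCube_mem_majorities (hT : IsTernaryClone T) (hs : s ∈ majorities T) :
    s.crossCube ∈ majorities T :=
  have hq := hT.square_mem_majorities hs
  ⟨hT.comp_mem s hs.1 _ hT.proj₁_mem _ hT.proj₂_mem _ hq.1, hs.2.comp_proj₁_proj₂ hq.2⟩

theorem mix_mem_majorities (hT : IsTernaryClone T) (hs : s ∈ majorities T) :
    s.mix ∈ majorities T :=
  have hq := hT.rot_mem_majorities (hT.square_mem_majorities hs)
  ⟨hT.comp_mem s hs.1 _ hT.proj₁_mem _ hs.1 _ hq.1, hs.2.comp_proj₁ hs.2 hq.2⟩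

theorem squareOrbit_mem_majorities (hT : IsTernaryClone T) (hs : s ∈ majorities T) :
    s.squareOrbit ∈ majorities T :=
  have hq := hT.square_mem_majorities hs
  have hq₁ := hT.rot_mem_majorities hq
  have hq₂ := hT.rot_mem_majorities hq₁
  ⟨hT.comp_mem s hs.1 _ hq.1 _ hq₁.1 _ hq₂.1, hs.2.comp hq.2 hq₁.2 hq₂.2⟩

theorem pointedOrbit_mem_majorities (hT : IsTernaryClone T) (hs : s ∈ majorities T) :
    s.pointedOrbit ∈ majorities T :=
  have hq := hT.square_mem_majorities hs
  have hq₁ := hT.rot_mem_majorities hq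
  have hq₂ := hT.rot_mem_majorities hq₁
  ⟨hT.comp_mem _ hq.1 _ hT.proj₁_mem _ hq₁.1 _ hq₂.1, hq.2.comp_proj₁ hq₁.2 hq₂.2⟩

theorem twist_mem_majorities (hT : IsTernaryClone T) (hf : f ∈ majorities T)
    (hu : u ∈ majorities T) : f.twist u ∈ majorities T :=
  ⟨hT.comp_mem f hf.1 _ hT.proj₁_mem u hu.1 _ (hT.swap_mem_majorities hu).1, hf.2.twist hu.2⟩

theorem exists_symmetricMajority_square_eq (hT : IsTernaryClone T) (hfin : (majorities T).Finite)
    (hcyclic : ∀ h ∈ majorities T, h.Cyclic) (hs : s ∈ T) (hsymm : s.SymmetricMajority) :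
    ∃ e ∈ T, e.SymmetricMajority ∧ e.square = e := by
  let M := {h // h ∈ T ∧ h.SymmetricMajority}
  have : Finite M := (hfin.subset fun h hh => ⟨hh.1, hh.2.toMajority⟩).to_subtype
  have : Nonempty M := ⟨s, hs, hsymm⟩
  let _ : Semigroup M :=
    { mul h k :=
        have hmem := hT.comp_proj₂_proj₃_mem_majorities ⟨h.2.1, h.2.2.toMajority⟩
          ⟨k.2.1, k.2.2.toMajority⟩
        ⟨comp h k proj₂ proj₃, hmem.1, h.2.2.comp_proj₂_proj₃ k.2.2 (hcyclic _ hmem)⟩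
      mul_assoc _ _ _ := rfl }
  let _ : TopologicalSpace M := ⊥
  have : DiscreteTopology M := ⟨rfl⟩
  obtain ⟨e, he⟩ := exists_idempotent_of_compact_t2_of_continuous_mul_left (M := M)
    fun _ => continuous_of_discreteTopology
  exact ⟨e, e.2.1, e.2.2, congrArg Subtype.val he⟩

theorem ncard_majorities_ne_of_swap_ne (hT : IsTernaryClone T) (hfin : (majorities T).Finite)
    (hcyclic : ∀ h ∈ majorities T, h.Cyclic) (hswap : ∀ h ∈ majorities T, h.swap ≠ h)
    (hf : f ∈ majorities T) : (majorities T).ncard ≠ 2 ∧ (majorities T).ncard ≠ 4 := by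
  have hg := hT.twist_mem_majorities hf hf
  have hk := hT.twist_mem_majorities hf hg
  have ne_self : f.twist f ≠ f := fun h =>
    hswap f hf ((hcyclic f hf).swap_eq_of_twist_eq_self hf.2 h)
  have ne_swap : f.twist f ≠ f.swap := fun h =>
    hswap f hf ((hcyclic f hf).swap_eq_of_twist_eq_swap hf.2 h)
  have ncard_eq : ({f, f.swap, f.twist f, (f.twist f).swap} : Set (TernaryOp A)).ncard = 4 :=
    Set.ncard_eq_four.2 ⟨_, _, _, _, (hswap f hf).symm, ne_self.symm,
      fun h => ne_swap (congrArg TernaryOp.swap h).symm, ne_swap.symm,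
      fun h => ne_self (congrArg TernaryOp.swap h).symm, (hswap _ hg).symm, rfl⟩
  have subset : {f, f.swap, f.twist f, (f.twist f).swap} ⊆ majorities T := by
    rintro _ (rfl | rfl | rfl | rfl)
    exacts [hf, hT.swap_mem_majorities hf, hg, hT.swap_mem_majorities hg]
  have le_ncard := Set.ncard_le_ncard subset hfin
  refine ⟨by omega, fun hcard => ?_⟩
  have eq := Set.eq_of_subset_of_ncard_le subset (hcard.trans ncard_eq.symm).le hfin
  exact twist_twist_notMem hf.2 (hcyclic f hf) (hcyclic _ hg) (hcyclic _ hk) (hswap _ hg)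
    (eq ▸ hk)

theorem rots_subset_majorities (hT : IsTernaryClone T) (hh : h ∈ majorities T) :
    h.rots ⊆ majorities T := by
  rintro _ (rfl | rfl | rfl)
  exacts [hh, hT.rot_mem_majorities hh, hT.rot_mem_majorities (hT.rot_mem_majorities hh)]

end IsTernaryClone

namespace IsTernaryClone

variable {T : Set (TernaryOp A)} {h s : TernaryOp A}

theorem ncard_majorities_ne_two_of_not_cyclic (hT : IsTernaryClone T)
    (hfin : (majorities T).Finite) (hh : h ∈ majorities T) (hcyclic : ¬h.Cyclic) :
    (majorities T).ncard ≠ 2 := by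
  have le_ncard := Set.ncard_le_ncard (hT.rots_subset_majorities hh) hfin
  rw [ncard_rots hcyclic] at le_ncard
  omega

theorem majorities_eq_of_notMem_rots (hT : IsTernaryClone T) (hcard : (majorities T).ncard = 4)
    (hh : h ∈ majorities T) (hcyclic : ¬h.Cyclic) (hs : s ∈ majorities T)
    (hnot : s ∉ h.rots) : majorities T = insert s h.rots := by
  have ncard_eq : (insert s h.rots : Set (TernaryOp A)).ncard = 4 := by
    rw [Set.ncard_insert_of_notMem hnot h.finite_rots, ncard_rots hcyclic]
  exact (Set.eq_of_subset_of_ncard_le (Set.insert_subset hs (hT.rots_subset_majorities hh))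
    (hcard.trans ncard_eq.symm).le (Set.finite_of_ncard_pos (by omega))).symm

theorem majorities_eq_of_cyclic_of_not_cyclic (hT : IsTernaryClone T)
    (hcard : (majorities T).ncard = 4) (hh : h ∈ majorities T) (hcyclic : ¬h.Cyclic)
    (hs : s ∈ majorities T) (hscyclic : s.Cyclic) : majorities T = insert s h.rots :=
  hT.majorities_eq_of_notMem_rots hcard hh hcyclic hs
    fun hmem => not_cyclic_of_mem_rots hcyclic hmem hscyclic

theorem exists_symmetricMajority (hT : IsTernaryClone T) (hcard : (majorities T).ncard = 4)
    (hh : h ∈ majorities T) (hcyclic : ¬h.Cyclic) : ∃ s ∈ majorities T, s.SymmetricMajority := by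
  obtain ⟨s, hs, hnot⟩ : ∃ s ∈ majorities T, s ∉ h.rots :=
    Set.exists_mem_notMem_of_ncard_lt_ncard (by rw [ncard_rots hcyclic, hcard]; norm_num)
      h.finite_rots
  have eq := hT.majorities_eq_of_notMem_rots hcard hh hcyclic hs hnot
  have hrot : s.rot ∈ insert s h.rots := eq ▸ hT.rot_mem_majorities hs
  have hscyclic : s.Cyclic :=
    cyclic_iff_rot_eq.2 (hrot.resolve_right fun hmem => hnot (mem_rots_of_rot_mem hmem))
  have hswap : s.swap ∈ insert s h.rots := eq ▸ hT.swap_mem_majorities hs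
  exact ⟨s, hs, hscyclic.symmetricMajority hs.2
    (hswap.resolve_right fun hmem => not_cyclic_of_mem_rots hcyclic hmem hscyclic.swap)⟩

end IsTernaryClone

namespace IsMinimalTernaryClone

variable {T : Set (TernaryOp A)} {e h s : TernaryOp A}

theorem majorities_eq_singleton [Nontrivial A] (hT : IsMinimalTernaryClone T) (he : e ∈ T)
    (hsymm : e.SymmetricMajority) (hidem : e.square = e) : majorities T = {e} := by
  refine Set.eq_singleton_iff_unique_mem.2 ⟨⟨he, hsymm.toMajority⟩, fun m hm => ?_⟩
  exact (hT.subset_of_stabilizes he hsymm.toMajority Set.subset_union_left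
    (hsymm.stabilizes_of_square_eq hidem) hm.1).resolve_left hm.2.notMem_projections

theorem not_absorbing_of_cyclic [Nontrivial A] (hT : IsMinimalTernaryClone T)
    (hs : s ∈ majorities T) (hscyclic : s.Cyclic) (hh : h ∈ T) (hcyclic : ¬h.Cyclic) :
    ¬h.Absorbing := fun H =>
  (hT.subset_of_stabilizes hh H.toMajority Set.subset_union_left H.stabilizes hs.1).elim
    hs.2.notMem_projections fun hmem => not_cyclic_of_mem_rots hcyclic hmem hscyclic

theorem ncard_majorities_ne_four_of_not_cyclic [Nontrivial A] (hT : IsMinimalTernaryClone T)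
    (hh : h ∈ majorities T) (hcyclic : ¬h.Cyclic) : (majorities T).ncard ≠ 4 := by
  intro hcard
  obtain ⟨s, hs, hsymm⟩ := hT.exists_symmetricMajority hcard hh hcyclic
  have hq := hT.square_mem_majorities hs
  have hqcyclic : ¬s.square.Cyclic := by
    intro hq'
    have mem : s.square ∈ insert s h.rots :=
      hT.majorities_eq_of_cyclic_of_not_cyclic hcard hh hcyclic hs hsymm.cyclic ▸ hq
    have hidem := mem.resolve_right fun hmem => not_cyclic_of_mem_rots hcyclic hmem hq'
    rw [hT.majorities_eq_singleton hs.1 hsymm hidem, Set.ncard_singleton] at hcard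
    omega
  have eq := hT.majorities_eq_of_cyclic_of_not_cyclic hcard hq hqcyclic hs hsymm.cyclic
  have mem {u : TernaryOp A} (hu : u ∈ majorities T) :
      u ∈ insert s s.square.rots := eq ▸ hu
  have horbit : s.squareOrbit = s :=
    (mem (hT.squareOrbit_mem_majorities hs)).resolve_right fun hmem =>
      not_cyclic_of_mem_rots hqcyclic hmem hsymm.squareOrbit_cyclic
  have hcube := hsymm.eq_or_eq_square_of_right_comm hqcyclic
    (mem (hT.cube_mem_majorities hs)) hsymm.cube_right_comm
  have hpointed := hsymm.eq_or_eq_square_of_right_comm hqcyclic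
    (mem (hT.pointedOrbit_mem_majorities hs)) hsymm.pointedOrbit_right_comm
  obtain ⟨cube, mix, crossCube⟩ := hsymm.cube_mix_crossCube_eq hqcyclic
    (mem (hT.mix_mem_majorities hs)) (mem (hT.crossCube_mem_majorities hs)) hcube horbit hpointed
  exact hT.not_absorbing_of_cyclic hs hsymm.cyclic hq.1 hqcyclic
    (hsymm.absorbing_square cube mix crossCube)

theorem ncard_majorities_ne [Nontrivial A] (hT : IsMinimalTernaryClone T) :
    (majorities T).ncard ≠ 2 ∧ (majorities T).ncard ≠ 4 := by
  rcases (majorities T).eq_empty_or_nonempty with hempty | ⟨f, hf⟩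
  · simp [hempty]
  by_cases hfin : (majorities T).Finite
  swap
  · simp [Set.Infinite.ncard hfin]
  by_cases hcyclic : ∀ h ∈ majorities T, h.Cyclic
  swap
  · push Not at hcyclic
    obtain ⟨h, hh, hcyclic⟩ := hcyclic
    exact ⟨hT.ncard_majorities_ne_two_of_not_cyclic hfin hh hcyclic,
      hT.ncard_majorities_ne_four_of_not_cyclic hh hcyclic⟩
  by_cases hswap : ∀ h ∈ majorities T, h.swap ≠ h
  · exact hT.ncard_majorities_ne_of_swap_ne hfin hcyclic hswap hf
  · push Not at hswap
    obtain ⟨s, hs, hswap⟩ := hswap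
    obtain ⟨e, he, hsymm, hidem⟩ := hT.exists_symmetricMajority_square_eq hfin hcyclic hs.1
      ((hcyclic s hs).symmetricMajority hs.2 hswap)
    simp [hT.majorities_eq_singleton he hsymm hidem]

end IsMinimalTernaryClone

/-! ### From clones to their ternary parts -/

/-- A ternary operation as an operation of the kind clones consist of. -/
def uncurry (h : TernaryOp A) : (Fin 3 → A) → A := fun t => h (t 0) (t 1) (t 2)

theorem uncurry_injective : Function.Injective (uncurry (A := A)) := fun _ _ hhk =>
  funext₃ fun x y z => congrFun hhk ![x, y, z]

theorem uncurry_surjective : Function.Surjective (uncurry (A := A)) := fun f =>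
  ⟨fun x y z => f ![x, y, z], funext fun t => congrArg f (FinVec.etaExpand_eq t)⟩

theorem isMajority_uncurry {h : TernaryOp A} : IsMajority h.uncurry ↔ h.Majority :=
  ⟨fun hh => ⟨fun x y => (hh x y).1, fun x y => (hh x y).2.1, fun x y => (hh x y).2.2⟩,
    fun hh x y => ⟨hh.fst x y, hh.snd x y, hh.thd x y⟩⟩

end TernaryOp

section TernaryPart

open TernaryOp

variable {A : Type u} {C D : Set (Ops A)}

/-- The ternary operations of a clone. -/
def ternaryPart (C : Set (Ops A)) : Set (TernaryOp A) := {h | (⟨2, h.uncurry⟩ : Ops A) ∈ C}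

/-- The operations of any arity under whose pointwise application a set `S` of ternary operations
is closed; this is the largest clone under which `S` is closed. -/
def stabilizer (S : Set (TernaryOp A)) : Set (Ops A) :=
  {g | ∀ p : Fin (g.1 + 1) → TernaryOp A, (∀ i, p i ∈ S) →
    (fun x y z => g.2 fun i => p i x y z) ∈ S}

theorem isClone_stabilizer (S : Set (TernaryOp A)) : IsClone (stabilizer S) :=
  ⟨fun _ i _ hp => hp i, fun _ _ _ _ hf hg p hp => hf _ fun i => hg i p hp⟩

theorem IsClone.inter (hC : IsClone C) (hD : IsClone D) : IsClone (C ∩ D) :=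
  ⟨fun n i => ⟨hC.1 n i, hD.1 n i⟩, fun n m f g hf hg =>
    ⟨hC.2 n m f g hf.1 fun i => (hg i).1, hD.2 n m f g hf.2 fun i => (hg i).2⟩⟩

theorem uncurry_mem_stabilizer {h : TernaryOp A} {S : Set (TernaryOp A)} :
    (⟨2, h.uncurry⟩ : Ops A) ∈ stabilizer S ↔ h.Stabilizes S :=
  ⟨fun hh u hu v hv w hw => hh ![u, v, w] (by simp [Fin.forall_fin_succ, hu, hv, hw]),
    fun hh p hp => hh _ (hp 0) _ (hp 1) _ (hp 2)⟩

theorem ternaryPart_projClone : ternaryPart (projClone A) = projections := by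
  ext h
  constructor
  · rintro ⟨i, hi⟩
    fin_cases i
    exacts [.inl (uncurry_injective hi), .inr (.inl (uncurry_injective hi)),
      .inr (.inr (uncurry_injective hi))]
  · rintro (rfl | rfl | rfl)
    exacts [⟨0, rfl⟩, ⟨1, rfl⟩, ⟨2, rfl⟩]

theorem IsClone.isTernaryClone (hC : IsClone C) : IsTernaryClone (ternaryPart C) where
  projections_subset := by
    rintro _ (rfl | rfl | rfl)
    exacts [hC.1 2 0, hC.1 2 1, hC.1 2 2]
  comp_mem h hh u hu v hv w hw := by
    have mem := hC.2 2 2 h.uncurry ![u.uncurry, v.uncurry, w.uncurry] hh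
      (Fin.forall_fin_succ.2 ⟨hu, Fin.forall_fin_succ.2 ⟨hv, Fin.forall_fin_succ.2 ⟨hw, nofun⟩⟩⟩)
    exact mem

theorem IsMinimalClone.isMinimalTernaryClone [Nontrivial A] (hC : IsMinimalClone C) :
    IsMinimalTernaryClone (ternaryPart C) where
  toIsTernaryClone := hC.1.isTernaryClone
  subset_of_stabilizes {S h} hh hm hS hstab := by
    have mem : (⟨2, h.uncurry⟩ : Ops A) ∈ C ∩ stabilizer S := ⟨hh, uncurry_mem_stabilizer.2 hstab⟩
    rcases hC.2.2 _ (hC.1.inter (isClone_stabilizer S)) Set.inter_subset_left with eq | eq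
    · rw [eq] at mem
      exact absurd (ternaryPart_projClone.le mem) hm.notMem_projections
    · intro k hk
      have hk' : (⟨2, k.uncurry⟩ : Ops A) ∈ C ∩ stabilizer S := eq.symm ▸ hk
      exact uncurry_mem_stabilizer.1 hk'.2 _ (hS (.inl rfl)) _ (hS (.inr (.inl rfl))) _
        (hS (.inr (.inr rfl)))

theorem ncard_majorities_ternaryPart (C : Set (Ops A)) :
    (majorities (ternaryPart C)).ncard = (majorityOpsIn C).ncard := by
  have preimage : majorities (ternaryPart C) = uncurry ⁻¹' majorityOpsIn C := by
    ext h
    exact and_comm.trans (and_congr_left' isMajority_uncurry.symm)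
  rw [preimage]
  exact Set.ncard_preimage_of_injective_subset_range uncurry_injective
    fun f _ => uncurry_surjective f

theorem waldhauser_not_two_not_four_general (hC : IsMinimalClone C) :
    (majorityOpsIn C).ncard ≠ 2 ∧ (majorityOpsIn C).ncard ≠ 4 := by
  rcases subsingleton_or_nontrivial A with _ | _
  · have := Set.ncard_le_one_of_subsingleton (majorityOpsIn C)
    omega
  · rw [← ncard_majorities_ternaryPart]
    exact hC.isMinimalTernaryClone.ncard_majorities_ne

end TernaryPart

/-- **Waldhauser's Theorem on small minimal majority clones.**  If `C` is a minimal
clone on a set `A` generated by a majority operation, then the number of majority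
operations belonging to `C` is neither 2 nor 4. -/
theorem waldhauser_not_two_not_four {A : Type u} (f : (Fin 3 → A) → A)
    (hf : IsMajority f) (hmin : IsMinimalClone (cloneGen {(⟨2, f⟩ : Ops A)})) :
    (majorityOpsIn (cloneGen {(⟨2, f⟩ : Ops A)})).ncard ≠ 2 ∧
    (majorityOpsIn (cloneGen {(⟨2, f⟩ : Ops A)})).ncard ≠ 4 :=
  waldhauser_not_two_not_four_general hmin
end
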